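/- arXiv:1912.05069 — 2 statements merged into one kernel-verified Lean document; each statement's English description precedes it below -/
import Mathlib

section
/- Comparison of KPP solutions under constant multiples of initial data. Let u₁ and u₂ be solutions of the KPP equation with nonnegative bounded initial conditions, and let c > 1. If u₁(0,x) ≤ c·u₂(0,x) for all x ∈ ℝ, then u₁(t,x) ≤ c·u₂(t,x) for all t > 0 and x ∈ ℝ. -/
/-!
The branching mechanism `ψ` is convex on `[0, ∞)` with `ψ(0) = 0`, so `ψ(a) ≤ (a / b) ψ(b)` for
`0 ≤ a ≤ b` and `b > 0`. Together with `ψ(b) ≥ -b` this gives `c ψ(a) - ψ(b) ≤ b - c a` whenever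
`c ≥ 1` and `c a < b`. Hence `w = u₁ - c u₂` satisfies `∂w/∂t - (1/2) ∂²w/∂x² ≤ w` wherever it is
positive, and the parabolic maximum principle for functions bounded above yields `w ≤ 0`.
-/

open MeasureTheory Set Filter Topology

/-- The branching mechanism ψ(λ) = −λ + βλ² + ∫₀^∞ (e^{−λy} − 1 + λy) n(dy). -/
noncomputable def psi (β : ℝ) (n : Measure ℝ) (l : ℝ) : ℝ :=
  -l + β * l ^ 2 + ∫ y in Ioi (0 : ℝ), (Real.exp (-l * y) - 1 + l * y) ∂n

/-- A solution of the KPP equation ∂u/∂t − (1/2)∂²u/∂x² = −ψ(u): a nonnegative function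
on [0,∞) × ℝ, continuous on [0,∞) × ℝ, C^{1,2} on (0,∞) × ℝ, bounded on [0,T] × ℝ
for every T > 0, satisfying the equation for all t > 0, x ∈ ℝ. -/
def IsKPPSolution (β : ℝ) (n : Measure ℝ) (u : ℝ → ℝ → ℝ) : Prop :=
  (∀ t : ℝ, 0 ≤ t → ∀ x : ℝ, 0 ≤ u t x) ∧
  ContinuousOn (fun p : ℝ × ℝ => u p.1 p.2) (Ici (0 : ℝ) ×ˢ (univ : Set ℝ)) ∧
  (∀ x : ℝ, ∀ t : ℝ, 0 < t → DifferentiableAt ℝ (fun s => u s x) t) ∧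
  (∀ t : ℝ, 0 < t → ContDiff ℝ 2 (u t)) ∧
  (∀ T : ℝ, 0 < T → ∃ C : ℝ, ∀ t ∈ Icc (0 : ℝ) T, ∀ x : ℝ, |u t x| ≤ C) ∧
  (∀ t : ℝ, 0 < t → ∀ x : ℝ,
    deriv (fun s => u s x) t - (1 / 2) * deriv (deriv (u t)) x = -psi β n (u t x))

/-- The heat operator `∂u/∂t - D ∂²u/∂x²` with diffusivity `D`, applied to `u` at the point
`(t, x)`. -/
noncomputable def heatOp (D : ℝ) (u : ℝ → ℝ → ℝ) (t x : ℝ) : ℝ :=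
  deriv (fun s => u s x) t - D * deriv (deriv (u t)) x

/-- The regularity of classical solutions of parabolic equations on the strip `[0, T] × ℝ`:
continuity up to the initial line, differentiability in time and class `C²` in space for
`t ∈ (0, T]`. Time derivatives are two-sided, so the condition at `t = T` also involves the values
of `u` shortly after `T`. -/
structure IsClassicalOn (T : ℝ) (u : ℝ → ℝ → ℝ) : Prop where
  continuousOn : ContinuousOn (fun p : ℝ × ℝ => u p.1 p.2) (Icc 0 T ×ˢ univ)
  differentiableAt_time : ∀ t ∈ Ioc 0 T, ∀ x, DifferentiableAt ℝ (fun s => u s x) t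
  contDiff_space : ∀ t ∈ Ioc 0 T, ContDiff ℝ 2 (u t)

section HeatOp

variable {D T t : ℝ} {a : ℝ → ℝ} {u v : ℝ → ℝ → ℝ}

lemma IsClassicalOn.sub (hu : IsClassicalOn T u) (hv : IsClassicalOn T v) :
    IsClassicalOn T (fun s y => u s y - v s y) where
  continuousOn := hu.continuousOn.sub hv.continuousOn
  differentiableAt_time t ht x :=
    (hu.differentiableAt_time t ht x).sub (hv.differentiableAt_time t ht x)
  contDiff_space t ht := (hu.contDiff_space t ht).sub (hv.contDiff_space t ht)

lemma IsClassicalOn.time_mul (ha : Differentiable ℝ a) (hu : IsClassicalOn T u) :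
    IsClassicalOn T (fun s y => a s * u s y) where
  continuousOn := (ha.continuous.comp continuous_fst).continuousOn.mul hu.continuousOn
  differentiableAt_time t ht x := (ha t).mul (hu.differentiableAt_time t ht x)
  contDiff_space t ht := contDiff_const.mul (hu.contDiff_space t ht)

lemma heatOp_sub (hu : IsClassicalOn T u) (hv : IsClassicalOn T v) (ht : t ∈ Ioc 0 T) (x : ℝ) :
    heatOp D (fun s y => u s y - v s y) t x = heatOp D u t x - heatOp D v t x := by
  have hspace : deriv (deriv fun y => u t y - v t y) x =
      deriv (deriv (u t)) x - deriv (deriv (v t)) x := by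
    simpa only [iteratedDeriv_succ, iteratedDeriv_zero] using
      iteratedDeriv_fun_sub (hu.contDiff_space t ht).contDiffAt (hv.contDiff_space t ht).contDiffAt
  unfold heatOp
  rw [hspace, deriv_fun_sub (hu.differentiableAt_time t ht x) (hv.differentiableAt_time t ht x)]
  ring

lemma heatOp_time_mul (ha : Differentiable ℝ a) (hu : IsClassicalOn T u) (ht : t ∈ Ioc 0 T)
    (x : ℝ) :
    heatOp D (fun s y => a s * u s y) t x = a t * heatOp D u t x + deriv a t * u t x := by
  unfold heatOp
  rw [deriv_fun_mul (ha t) (hu.differentiableAt_time t ht x)]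
  simp only [deriv_const_mul_field']
  ring

end HeatOp

section MaximumPrinciple

lemma deriv_deriv_nonpos_of_isLocalMax {f : ℝ → ℝ} {x : ℝ} (hf : ContinuousAt f x)
    (h : IsLocalMax f x) : deriv (deriv f) x ≤ 0 := by
  by_contra! hpos
  have hmin : IsLocalMin f x := isLocalMin_of_deriv_deriv_pos hpos h.deriv_eq_zero hf
  have hconst : f =ᶠ[𝓝 x] fun _ => f x := by
    filter_upwards [h, hmin] with y hle hge using le_antisymm hle hge
  have hzero : deriv (deriv f) x = 0 := by simp [hconst.deriv.deriv_eq]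
  exact hpos.ne' hzero

lemma deriv_nonneg_of_isMaxOn_Icc {f : ℝ → ℝ} {a t : ℝ} (hat : a < t)
    (hf : DifferentiableAt ℝ f t) (h : IsMaxOn f (Icc a t) t) : 0 ≤ deriv f t := by
  have hcone : a - t ∈ posTangentConeAt (Icc a t) t :=
    sub_mem_posTangentConeAt_of_segment_subset
      ((convex_Icc a t).segment_subset (right_mem_Icc.2 hat.le) (left_mem_Icc.2 hat.le))
  have hle : (a - t) * deriv f t ≤ 0 := by
    simpa using h.localize.hasFDerivWithinAt_nonpos
      hf.hasDerivAt.hasFDerivAt.hasFDerivWithinAt hcone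
  exact nonneg_of_mul_nonpos_right hle (sub_neg.2 hat)

lemma heatOp_nonneg_of_isMaxOn {D T t x : ℝ} {u : ℝ → ℝ → ℝ} (hD : 0 ≤ D)
    (hu : IsClassicalOn T u) (ht : t ∈ Ioc 0 T)
    (hmax : IsMaxOn (fun p : ℝ × ℝ => u p.1 p.2) (Icc 0 T ×ˢ univ) (t, x)) :
    0 ≤ heatOp D u t x := by
  have htime : 0 ≤ deriv (fun s => u s x) t :=
    deriv_nonneg_of_isMaxOn_Icc ht.1 (hu.differentiableAt_time t ht x) fun s hs =>
      hmax (mk_mem_prod ⟨hs.1, hs.2.trans ht.2⟩ (mem_univ x))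
  have hspace : deriv (deriv (u t)) x ≤ 0 :=
    deriv_deriv_nonpos_of_isLocalMax (hu.contDiff_space t ht).continuous.continuousAt
      (.of_forall fun y => hmax (mk_mem_prod (Ioc_subset_Icc_self ht) (mem_univ y)))
  exact sub_nonneg.2 ((mul_nonpos_of_nonneg_of_nonpos hD hspace).trans htime)

lemma exists_isMaxOn_prod_univ {X E : Type*} [TopologicalSpace X] [T2Space X] [TopologicalSpace E]
    {s : Set X} {f : X × E → ℝ} {g : E → ℝ} (hs : IsCompact s)
    (hne : (s ×ˢ (univ : Set E)).Nonempty) (hf : ContinuousOn f (s ×ˢ univ))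
    (hg : Tendsto g (cocompact E) atBot)
    (hfg : ∀ p ∈ s ×ˢ (univ : Set E), f p ≤ g p.2) :
    ∃ p ∈ s ×ˢ (univ : Set E), IsMaxOn f (s ×ˢ univ) p := by
  obtain ⟨p₀, hp₀⟩ := hne
  refine hf.exists_isMaxOn' (hs.isClosed.prod isClosed_univ) hp₀ ?_
  obtain ⟨k, hk, hkg⟩ := mem_cocompact.1 (hg.eventually_le_atBot (f p₀))
  rw [eventually_inf_principal]
  filter_upwards [(hs.prod hk).compl_mem_cocompact] with p hp hps
  exact (hfg p hps).trans (hkg fun hpk => hp ⟨hps.1, hpk⟩)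

lemma tendsto_sub_mul_norm_sq_cocompact_atBot {E : Type*} [SeminormedAddCommGroup E]
    [ProperSpace E] {ε : ℝ} (hε : 0 < ε) (C : ℝ) :
    Tendsto (fun x : E => C - ε * ‖x‖ ^ 2) (cocompact E) atBot :=
  tendsto_atBot_add_const_left _ C <| tendsto_neg_atTop_atBot.comp <|
    ((tendsto_pow_atTop two_ne_zero).comp tendsto_norm_cocompact_atTop).const_mul_atTop hε

/-- A function growing quadratically in space on which the heat operator with
diffusivity `D` is identically `1`. Subtracting a small multiple of it makes a function that is
bounded above attain its maximum and makes the differential inequality it satisfies strict. -/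
def heatBarrier (D t x : ℝ) : ℝ := x ^ 2 + (2 * D + 1) * t

lemma sq_le_heatBarrier {D t : ℝ} (hD : 0 ≤ D) (ht : 0 ≤ t) (x : ℝ) :
    x ^ 2 ≤ heatBarrier D t x :=
  le_add_of_nonneg_right (by positivity)

lemma isClassicalOn_heatBarrier (D T : ℝ) : IsClassicalOn T (heatBarrier D) where
  continuousOn := by unfold heatBarrier; fun_prop
  differentiableAt_time t _ x := by unfold heatBarrier; fun_prop
  contDiff_space t _ := by unfold heatBarrier; fun_prop

lemma heatOp_heatBarrier (D t x : ℝ) : heatOp D (heatBarrier D) t x = 1 := by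
  have htime : deriv (fun s => heatBarrier D s x) t = 2 * D + 1 := by simp [heatBarrier]
  have hspace : deriv (heatBarrier D t) = fun y => 2 * y := by
    funext y
    change deriv (fun y => y ^ 2 + (2 * D + 1) * t) y = 2 * y
    simp
  rw [heatOp, htime, hspace]
  simp
  ring

theorem nonpos_of_heatOp_nonpos {D T C : ℝ} {u : ℝ → ℝ → ℝ} (hD : 0 ≤ D) (hu : IsClassicalOn T u)
    (hbdd : ∀ t ∈ Icc 0 T, ∀ x, u t x ≤ C) (hinit : ∀ x, u 0 x ≤ 0)
    (hheat : ∀ t ∈ Ioc 0 T, ∀ x, 0 < u t x → heatOp D u t x ≤ 0) :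
    ∀ t ∈ Icc 0 T, ∀ x, u t x ≤ 0 := by
  intro t₀ ht₀ x₀
  by_contra! hpos
  obtain ⟨ε, hε, hε₀⟩ := exists_pos_mul_lt hpos (heatBarrier D t₀ x₀)
  have hb : IsClassicalOn T (fun t x => ε * heatBarrier D t x) :=
    (isClassicalOn_heatBarrier D T).time_mul (differentiable_const ε)
  obtain ⟨⟨t, x⟩, ⟨ht, -⟩, hmax⟩ :=
    exists_isMaxOn_prod_univ isCompact_Icc ⟨(t₀, x₀), ht₀, mem_univ x₀⟩ (hu.sub hb).continuousOn
      (tendsto_sub_mul_norm_sq_cocompact_atBot hε C) fun p hp => by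
        rw [Real.norm_eq_abs, sq_abs]
        gcongr
        · exact hbdd p.1 hp.1 p.2
        · exact sq_le_heatBarrier hD hp.1.1 p.2
  have hux : 0 < u t x := by
    have hmax₀ : u t₀ x₀ - ε * heatBarrier D t₀ x₀ ≤ u t x - ε * heatBarrier D t x :=
      hmax (mk_mem_prod ht₀ (mem_univ x₀))
    linarith [mul_nonneg hε.le ((sq_nonneg x).trans (sq_le_heatBarrier hD ht.1 x))]
  have ht_pos : 0 < t := ht.1.lt_of_ne fun h => (hinit x).not_gt (h ▸ hux)
  have hstrict : 0 ≤ heatOp D u t x - ε := by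
    simpa [heatOp_sub hu hb ⟨ht_pos, ht.2⟩, heatOp_heatBarrier,
      heatOp_time_mul (differentiable_const ε) (isClassicalOn_heatBarrier D T) ⟨ht_pos, ht.2⟩]
      using heatOp_nonneg_of_isMaxOn hD (hu.sub hb) ⟨ht_pos, ht.2⟩ hmax
  linarith [hheat t ⟨ht_pos, ht.2⟩ x hux]

theorem nonpos_of_heatOp_le_mul {D K T C : ℝ} {u : ℝ → ℝ → ℝ} (hD : 0 ≤ D)
    (hu : IsClassicalOn T u) (hbdd : ∀ t ∈ Icc 0 T, ∀ x, u t x ≤ C) (hinit : ∀ x, u 0 x ≤ 0)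
    (hheat : ∀ t ∈ Ioc 0 T, ∀ x, 0 < u t x → heatOp D u t x ≤ K * u t x) :
    ∀ t ∈ Icc 0 T, ∀ x, u t x ≤ 0 := by
  -- The factor `e^{-Kt}` absorbs the zeroth-order term `K u`.
  have hdiff : Differentiable ℝ fun t => Real.exp (-K * t) := by fun_prop
  have hderiv (t : ℝ) : deriv (fun t => Real.exp (-K * t)) t = -K * Real.exp (-K * t) := by
    simpa [mul_comm] using ((hasDerivAt_id t).const_mul (-K)).exp.deriv
  have hdamped : ∀ t ∈ Icc 0 T, ∀ x, Real.exp (-K * t) * u t x ≤ 0 := by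
    refine nonpos_of_heatOp_nonpos (C := Real.exp (|K| * T) * |C|) hD (hu.time_mul hdiff)
      (fun t ht x => ?_) (fun x => by simpa using hinit x) (fun t ht x hux => ?_)
    · have hexponent : -K * t ≤ |K| * T :=
        mul_le_mul (neg_le_abs K) ht.2 ht.1 (abs_nonneg K)
      calc Real.exp (-K * t) * u t x ≤ Real.exp (-K * t) * |C| := by
            gcongr
            exact (hbdd t ht x).trans (le_abs_self C)
        _ ≤ Real.exp (|K| * T) * |C| := by gcongr
    · have hu_pos : 0 < u t x := pos_of_mul_pos_right hux (Real.exp_pos _).le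
      rw [heatOp_time_mul hdiff hu ht, hderiv]
      calc Real.exp (-K * t) * heatOp D u t x + -K * Real.exp (-K * t) * u t x
          = Real.exp (-K * t) * (heatOp D u t x - K * u t x) := by ring
        _ ≤ 0 := mul_nonpos_of_nonneg_of_nonpos (Real.exp_pos _).le
            (sub_nonpos.2 (hheat t ht x hu_pos))
  exact fun t ht x => nonpos_of_mul_nonpos_right (hdamped t ht x) (Real.exp_pos _)

end MaximumPrinciple

section ConvexReaction

variable {D K T C c : ℝ} {F : ℝ → ℝ}

lemma const_mul_sub_le_of_convexOn {a b : ℝ} (hF : ConvexOn ℝ (Ici 0) F) (hF0 : F 0 = 0)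
    (hFK : ∀ r, 0 ≤ r → -K * r ≤ F r) (hc : 1 ≤ c) (ha : 0 ≤ a) (hab : c * a < b) :
    c * F a - F b ≤ K * (b - c * a) := by
  have hb : 0 < b := (mul_nonneg (zero_le_one.trans hc) ha).trans_lt hab
  have ha_le : a ≤ b := (le_mul_of_one_le_left ha hc).trans hab.le
  have hchord : F a ≤ a / b * F b := by
    have hFab := hF.2 self_mem_Ici hb.le (sub_nonneg.2 ((div_le_one hb).2 ha_le))
      (div_nonneg ha hb.le) (sub_add_cancel 1 (a / b))
    simpa [hF0, div_mul_cancel₀ a hb.ne'] using hFab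
  calc c * F a - F b ≤ c * (a / b * F b) - F b := by gcongr
    _ = (b - c * a) / b * -F b := by field_simp; ring
    _ ≤ (b - c * a) / b * (K * b) := by
        have hFb : -F b ≤ K * b := by linarith [hFK b hb.le]
        gcongr
    _ = K * (b - c * a) := by field_simp

theorem kpp_comparison_const_multiple_general {u v : ℝ → ℝ → ℝ} (hD : 0 ≤ D)
    (hF : ConvexOn ℝ (Ici 0) F) (hF0 : F 0 = 0) (hFK : ∀ r, 0 ≤ r → -K * r ≤ F r)
    (hu : IsClassicalOn T u) (hv : IsClassicalOn T v)
    (hu_bdd : ∀ t ∈ Icc 0 T, ∀ x, u t x ≤ C) (hv_nonneg : ∀ t ∈ Icc 0 T, ∀ x, 0 ≤ v t x)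
    (hu_sub : ∀ t ∈ Ioc 0 T, ∀ x, heatOp D u t x ≤ -F (u t x))
    (hv_super : ∀ t ∈ Ioc 0 T, ∀ x, -F (v t x) ≤ heatOp D v t x)
    (hc : 1 ≤ c) (hinit : ∀ x, u 0 x ≤ c * v 0 x) :
    ∀ t ∈ Icc 0 T, ∀ x, u t x ≤ c * v t x := by
  have hc₀ : 0 ≤ c := zero_le_one.trans hc
  have hcv : IsClassicalOn T (fun t x => c * v t x) := hv.time_mul (differentiable_const c)
  suffices h : ∀ t ∈ Icc 0 T, ∀ x, u t x - c * v t x ≤ 0 from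
    fun t ht x => sub_nonpos.1 (h t ht x)
  refine nonpos_of_heatOp_le_mul (K := K) (C := C) hD (hu.sub hcv) (fun t ht x => ?_)
    (fun x => sub_nonpos.2 (hinit x)) (fun t ht x hpos => ?_)
  · exact (sub_le_self _ (mul_nonneg hc₀ (hv_nonneg t ht x))).trans (hu_bdd t ht x)
  · calc heatOp D (fun t x => u t x - c * v t x) t x
        = heatOp D u t x - c * heatOp D v t x := by
          rw [heatOp_sub hu hcv ht, heatOp_time_mul (differentiable_const c) hv ht, deriv_const,
            zero_mul, add_zero]
      _ ≤ -F (u t x) - c * -F (v t x) := by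
          gcongr
          · exact hu_sub t ht x
          · exact hv_super t ht x
      _ = c * F (v t x) - F (u t x) := by ring
      _ ≤ K * (u t x - c * v t x) :=
          const_mul_sub_le_of_convexOn hF hF0 hFK hc (hv_nonneg t (Ioc_subset_Icc_self ht) x)
            (sub_pos.1 hpos)

end ConvexReaction

section BranchingMechanism

lemma exp_neg_sub_one_add_nonneg (a : ℝ) : 0 ≤ Real.exp (-a) - 1 + a := by
  linarith [Real.one_sub_le_exp_neg a]

lemma exp_neg_sub_one_add_le {a : ℝ} (ha : 0 ≤ a) :
    Real.exp (-a) - 1 + a ≤ a ^ 2 / (1 + a) := by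
  have hexp : Real.exp (-a) ≤ (1 + a)⁻¹ := by
    rw [Real.exp_neg]
    gcongr
    linarith [Real.add_one_le_exp a]
  calc Real.exp (-a) - 1 + a ≤ (1 + a)⁻¹ - 1 + a := by gcongr
    _ = a ^ 2 / (1 + a) := by field_simp; ring

lemma exp_neg_mul_sub_one_add_le {l y : ℝ} (hl : 0 ≤ l) (hy : 0 ≤ y) :
    Real.exp (-l * y) - 1 + l * y ≤ (l ^ 2 + l) * min (y ^ 2) y := by
  have hly : 0 ≤ l * y := mul_nonneg hl hy
  rw [neg_mul, mul_min_of_nonneg _ _ (by positivity)]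
  refine (exp_neg_sub_one_add_le hly).trans (le_min ?_ ?_) <;> rw [div_le_iff₀ (by positivity)]
  · have hdiff : 0 ≤ l * y ^ 2 + (l ^ 2 + l) * y ^ 2 * (l * y) := by positivity
    linarith
  · have hdiff : 0 ≤ l ^ 2 * y + l * y + l ^ 3 * y ^ 2 := by positivity
    linarith

lemma integrableOn_exp_neg_mul_sub_one_add {n : Measure ℝ} {l : ℝ}
    (hn : ∫⁻ y in Ioi (0 : ℝ), ENNReal.ofReal (min (y ^ 2) y) ∂n < ⊤) (hl : 0 ≤ l) :
    IntegrableOn (fun y => Real.exp (-l * y) - 1 + l * y) (Ioi 0) n := by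
  have hpos : ∀ᵐ y ∂n.restrict (Ioi 0), 0 < y := ae_restrict_mem measurableSet_Ioi
  have hmin : IntegrableOn (fun y : ℝ => min (y ^ 2) y) (Ioi 0) n := by
    refine ⟨by fun_prop, (hasFiniteIntegral_iff_ofReal ?_).2 hn⟩
    filter_upwards [hpos] with y hy using le_min (sq_nonneg y) hy.le
  refine (hmin.const_mul (l ^ 2 + l)).mono' (by fun_prop) ?_
  filter_upwards [hpos] with y hy
  rw [Real.norm_of_nonneg (by simpa using exp_neg_sub_one_add_nonneg (l * y))]
  exact exp_neg_mul_sub_one_add_le hl hy.le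

lemma convexOn_exp_neg_mul_sub_one_add (y : ℝ) :
    ConvexOn ℝ univ fun l => Real.exp (-l * y) - 1 + l * y := by
  have hexp : ConvexOn ℝ univ fun l => Real.exp (-l * y) := by
    simpa [Function.comp_def, mul_comm] using
      convexOn_exp.comp_linearMap (LinearMap.mulLeft ℝ (-y))
  have hlin : ConvexOn ℝ univ fun l => l * y :=
    (LinearMap.mulRight ℝ y).convexOn convex_univ
  exact (hexp.sub (concaveOn_const 1 convex_univ)).add hlin

lemma convexOn_psi {β : ℝ} {n : Measure ℝ} (hβ : 0 ≤ β)
    (hn : ∫⁻ y in Ioi (0 : ℝ), ENNReal.ofReal (min (y ^ 2) y) ∂n < ⊤) :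
    ConvexOn ℝ (Ici 0) (psi β n) := by
  have hneg : ConvexOn ℝ (Ici 0) fun l : ℝ => -l := (concaveOn_id (convex_Ici 0)).neg
  have hquad : ConvexOn ℝ (Ici 0) fun l : ℝ => β * l ^ 2 := (convexOn_pow 2).smul hβ
  have hint : ConvexOn ℝ (Ici 0) fun l =>
      ∫ y in Ioi (0 : ℝ), (Real.exp (-l * y) - 1 + l * y) ∂n :=
    integral_convexOn_of_integrand_ae (convex_Ici 0)
      (.of_forall fun y =>
        (convexOn_exp_neg_mul_sub_one_add y).subset (subset_univ _) (convex_Ici 0))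
      fun l hl => integrableOn_exp_neg_mul_sub_one_add hn hl
  exact (hneg.add hquad).add hint

lemma psi_zero (β : ℝ) (n : Measure ℝ) : psi β n 0 = 0 := by
  simp [psi]

lemma neg_le_psi {β : ℝ} (hβ : 0 ≤ β) (n : Measure ℝ) (l : ℝ) : -l ≤ psi β n l := by
  have hint : 0 ≤ ∫ y in Ioi (0 : ℝ), (Real.exp (-l * y) - 1 + l * y) ∂n :=
    integral_nonneg fun y => by simpa using exp_neg_sub_one_add_nonneg (l * y)
  unfold psi
  linarith [mul_nonneg hβ (sq_nonneg l)]

end BranchingMechanism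

namespace IsKPPSolution

variable {β : ℝ} {n : Measure ℝ} {u : ℝ → ℝ → ℝ}

lemma nonneg (hu : IsKPPSolution β n u) {t : ℝ} (ht : 0 ≤ t) (x : ℝ) : 0 ≤ u t x :=
  hu.1 t ht x

lemma isClassicalOn (hu : IsKPPSolution β n u) (T : ℝ) : IsClassicalOn T u where
  continuousOn := hu.2.1.mono (prod_mono Icc_subset_Ici_self subset_rfl)
  differentiableAt_time t ht x := hu.2.2.1 x t ht.1
  contDiff_space t ht := hu.2.2.2.1 t ht.1

lemma exists_forall_le (hu : IsKPPSolution β n u) {T : ℝ} (hT : 0 < T) :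
    ∃ C, ∀ t ∈ Icc 0 T, ∀ x, u t x ≤ C :=
  (hu.2.2.2.2.1 T hT).imp fun _ hC t ht x => (le_abs_self _).trans (hC t ht x)

lemma heatOp_eq (hu : IsKPPSolution β n u) {t : ℝ} (ht : 0 < t) (x : ℝ) :
    heatOp (1 / 2) u t x = -psi β n (u t x) :=
  hu.2.2.2.2.2 t ht x

end IsKPPSolution

/-- Comparison of KPP solutions under constant multiples of initial data. -/
theorem kpp_comparison_const_multiple
    (β : ℝ) (hβ : 0 ≤ β) (n : Measure ℝ) [SigmaFinite n]
    (hn : ∫⁻ y in Ioi (0 : ℝ), ENNReal.ofReal (min (y ^ 2) y) ∂n < ⊤)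
    (u₁ u₂ : ℝ → ℝ → ℝ)
    (hu₁ : IsKPPSolution β n u₁) (hu₂ : IsKPPSolution β n u₂)
    (hbdd₁ : ∃ C : ℝ, ∀ x : ℝ, u₁ 0 x ≤ C) (hbdd₂ : ∃ C : ℝ, ∀ x : ℝ, u₂ 0 x ≤ C)
    (c : ℝ) (hc : 1 < c)
    (hinit : ∀ x : ℝ, u₁ 0 x ≤ c * u₂ 0 x) :
    ∀ t : ℝ, 0 < t → ∀ x : ℝ, u₁ t x ≤ c * u₂ t x := by
  intro t ht x
  obtain ⟨C, hC⟩ := hu₁.exists_forall_le ht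
  exact kpp_comparison_const_multiple_general (K := 1) (by norm_num) (convexOn_psi hβ hn)
    (psi_zero β n) (fun l _ => by simpa using neg_le_psi hβ n l) (hu₁.isClassicalOn t)
    (hu₂.isClassicalOn t) hC (fun s hs => hu₂.nonneg hs.1) (fun s hs y => (hu₁.heatOp_eq hs.1 y).le)
    (fun s hs y => (hu₂.heatOp_eq hs.1 y).ge) hc.le hinit t (right_mem_Icc.2 ht.le) x
end

section
/- Existence of a blow-up solution of the stable ODE (Lemma 4.2). Let a > 0, b > 0 and ϑ ∈ (0,1]. There exist positive constants c₁ = c₁(a,b,ϑ), c₂ = c₂(a,b,ϑ) and c₃ = c₃(a,b,ϑ) such that for every A > 0 there is an even, twice continuously differentiable function h_A : (−A,A) → ℝ satisfying (1/2) h_A″(x) = −a h_A(x) + b h_A(x)^{1+ϑ} for |x| < A, with h_A(x) → ∞ as x → A− and as x → −A+, and such that: (1) max{(a/b)^{1/ϑ}, c₂ A^{2/ϑ} (A² − x²)^{−2/ϑ}} ≤ h_A(x) ≤ (a/b)^{1/ϑ} (1 + c₁ A^{2/ϑ} (A² − x²)^{−2/ϑ}) for all |x| < A; (2) |h_A′(x)|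 / h_A(x) ≤ c₃ / (A − |x|) for all |x| < A. -/
open MeasureTheory Set Filter Topology

/-!
By scaling it suffices to solve `v'' = v ^ (1 + ϑ) - v` on `(-R, R)` with bounds uniform in `R`.
The even solution with minimum `m > 1` is given by a quadrature: in terms of the phase `s` with
`v = m + s ^ 2`, conservation of energy reads `s' = phaseSpeed s`, where `phaseSpeed` is
continuous and positive even at the turning point `s = 0`. The solution therefore lives on
`(-T, T)` with `T = ∫ t in Ioi 0, (phaseSpeed t)⁻¹`, and the distance from `x` to the blow-up
point is the tail of the same integral beyond the current phase. Here `phaseSpeed t` is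
comparable, uniformly in `m`, to `(v - 1) ^ (1 / 2) * v ^ (ϑ / 2)`, so `T` is continuous in `m`,
tends to `0` as `m → ∞` and to infinity (logarithmically) as `m → 1`, and hence takes every value
`R > 0`; comparing the tails with those of explicit powers gives the two-sided bounds and the
gradient bound.
-/

/-- `v` is an even solution of `v'' = f v` on the interval `(-R, R)`, with derivative `w`. -/
structure IsEvenSolution (f : ℝ → ℝ) (R : ℝ) (v w : ℝ → ℝ) : Prop where
  even : ∀ x ∈ Ioo (-R) R, v (-x) = v x
  hasDerivAt : ∀ x ∈ Ioo (-R) R, HasDerivAt v (w x) x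
  hasDerivAt_deriv : ∀ x ∈ Ioo (-R) R, HasDerivAt w (f (v x)) x

namespace IsEvenSolution

variable {f : ℝ → ℝ} {R : ℝ} {v w : ℝ → ℝ} {x : ℝ}

lemma hasDerivAt_deriv_self (h : IsEvenSolution f R v w) (hx : x ∈ Ioo (-R) R) :
    HasDerivAt (deriv v) (f (v x)) x :=
  (h.hasDerivAt_deriv x hx).congr_of_eventuallyEq <|
    eventually_of_mem (isOpen_Ioo.mem_nhds hx) fun y hy => (h.hasDerivAt y hy).deriv

lemma contDiffAt (h : IsEvenSolution f R v w) (hf : Continuous f) (hx : x ∈ Ioo (-R) R) :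
    ContDiffAt ℝ 2 v x := by
  have hcont : ContinuousOn (fun y => f (v y)) (Ioo (-R) R) :=
    hf.comp_continuousOn fun y hy => (h.hasDerivAt y hy).continuousAt.continuousWithinAt
  have hw : ContDiffOn ℝ 1 w (Ioo (-R) R) :=
    zero_add (1 : WithTop ℕ∞) ▸ (contDiffOn_succ_iff_deriv_of_isOpen isOpen_Ioo).2
      ⟨fun y hy => (h.hasDerivAt_deriv y hy).differentiableAt.differentiableWithinAt, by simp,
        contDiffOn_zero.2 (hcont.congr fun y hy => (h.hasDerivAt_deriv y hy).deriv)⟩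
  have hv : ContDiffOn ℝ 2 v (Ioo (-R) R) :=
    one_add_one_eq_two (R := WithTop ℕ∞) ▸ (contDiffOn_succ_iff_deriv_of_isOpen isOpen_Ioo).2
      ⟨fun y hy => (h.hasDerivAt y hy).differentiableAt.differentiableWithinAt, by simp,
        hw.congr fun y hy => (h.hasDerivAt y hy).deriv⟩
  exact hv.contDiffAt (isOpen_Ioo.mem_nhds hx)

lemma rescale {g : ℝ → ℝ} {μ A : ℝ} (z : ℝ) (h : IsEvenSolution f (μ * A) v w) (hμ : 0 < μ)
    (hg : ∀ x ∈ Ioo (-(μ * A)) (μ * A), g (z * v x) = z * μ ^ 2 * f (v x)) :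
    IsEvenSolution g A (fun x => z * v (μ * x)) (fun x => z * μ * w (μ * x)) := by
  have hmem : ∀ x ∈ Ioo (-A) A, μ * x ∈ Ioo (-(μ * A)) (μ * A) := fun x hx =>
    ⟨by nlinarith [hx.1], by nlinarith [hx.2]⟩
  have hmul (x : ℝ) : HasDerivAt (fun y => μ * y) μ x := by
    simpa using (hasDerivAt_id x).const_mul μ
  refine ⟨fun x hx => ?_, fun x hx => ?_, fun x hx => ?_⟩
  · rw [mul_neg, h.even _ (hmem x hx)]
  · exact (((h.hasDerivAt _ (hmem x hx)).comp x (hmul x)).const_mul z).congr_deriv (by ring)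
  · rw [hg _ (hmem x hx)]
    exact (((h.hasDerivAt_deriv _ (hmem x hx)).comp x (hmul x)).const_mul (z * μ)).congr_deriv
      (by ring)

end IsEvenSolution

lemma hasDerivAt_of_sq_eq {w E : ℝ → ℝ} {E' y : ℝ} (hw : ContinuousAt w y) (hy : w y ≠ 0)
    (hE : HasDerivAt E E' y) (hsq : ∀ x, w x ^ 2 = E x) :
    HasDerivAt w (E' / (2 * w y)) y := by
  rw [hasDerivAt_iff_tendsto_slope] at hE ⊢
  have hw' : Tendsto w (𝓝[≠] y) (𝓝 (w y)) := hw.tendsto.mono_left nhdsWithin_le_nhds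
  have hsum : Tendsto (fun x => w x + w y) (𝓝[≠] y) (𝓝 (2 * w y)) := by
    simpa only [two_mul] using hw'.add_const (w y)
  have h2 : 2 * w y ≠ 0 := mul_ne_zero two_ne_zero hy
  refine (hE.div hsum h2).congr' ?_
  filter_upwards [hsum.eventually_ne h2] with x hx
  rw [Pi.div_apply, div_eq_iff hx, slope_def_field, slope_def_field, ← hsq, ← hsq]
  ring

section Quadrature

/-- The reduced energy equation: writing an even solution of `v'' = F' v` with `v 0 = m` as
`v = m + s ^ 2`, conservation of `v' ^ 2 / 2 - F v` becomes `s' = phaseSpeed F m s`. Unlike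
`√(2 * (F v - F m))`, this does not vanish at `v = m`. -/
noncomputable def phaseSpeed (F : ℝ → ℝ) (m s : ℝ) : ℝ := √(dslope F m (m + s ^ 2) / 2)

/-- The position at which the phase of the solution starting from `m` at `0` reaches `s`. -/
noncomputable def phaseTime (F : ℝ → ℝ) (m s : ℝ) : ℝ := ∫ t in 0..s, (phaseSpeed F m t)⁻¹

/-- The half-length of the interval of existence of the even solution with minimum `m`. -/
noncomputable def blowupTime (F : ℝ → ℝ) (m : ℝ) : ℝ := ∫ t in Ioi 0, (phaseSpeed F m t)⁻¹

/-- The Keller–Osserman condition; without it `blowupTime F m` has the junk value `0`. -/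
def FiniteBlowupTime (F : ℝ → ℝ) (m : ℝ) : Prop :=
  IntegrableOn (fun t => (phaseSpeed F m t)⁻¹) (Ioi 0)

/-- The inverse of `phaseTime`; meaningful on `(-blowupTime F m, blowupTime F m)`. -/
noncomputable def phase (F : ℝ → ℝ) (m : ℝ) : ℝ → ℝ := Function.invFun (phaseTime F m)

/-- `F` is a potential for the continuous force `f`, which is positive at `m` and nondecreasing
to the right of `m`. -/
structure IsRepulsivePotential (F f : ℝ → ℝ) (m : ℝ) : Prop where
  hasDerivAt : ∀ v, HasDerivAt F (f v) v
  continuous_force : Continuous f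
  monotoneOn : MonotoneOn f (Ici m)
  pos : 0 < f m

lemma phaseSpeed_neg (F : ℝ → ℝ) (m s : ℝ) : phaseSpeed F m (-s) = phaseSpeed F m s := by
  simp only [phaseSpeed, neg_sq]

lemma phaseSpeed_abs (F : ℝ → ℝ) (m s : ℝ) : phaseSpeed F m |s| = phaseSpeed F m s := by
  simp only [phaseSpeed, sq_abs]

lemma phaseTime_zero (F : ℝ → ℝ) (m : ℝ) : phaseTime F m 0 = 0 :=
  intervalIntegral.integral_same

lemma phaseTime_neg (F : ℝ → ℝ) (m s : ℝ) : phaseTime F m (-s) = -phaseTime F m s := by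
  have h := intervalIntegral.integral_comp_neg (a := 0) (b := -s) fun t => (phaseSpeed F m t)⁻¹
  simp only [phaseSpeed_neg, neg_neg, neg_zero] at h
  rw [phaseTime, h, intervalIntegral.integral_symm, phaseTime]

lemma blowupTime_sub_phaseTime {F : ℝ → ℝ} {m s : ℝ}
    (hfin : FiniteBlowupTime F m) (hs : 0 ≤ s) :
    blowupTime F m - phaseTime F m s = ∫ t in Ioi s, (phaseSpeed F m t)⁻¹ := by
  rw [blowupTime, phaseTime, ← intervalIntegral.integral_Ioi_sub_Ioi hfin hs, sub_sub_cancel]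

namespace IsRepulsivePotential

variable {F f : ℝ → ℝ} {m v : ℝ}

lemma exists_dslope_eq (h : IsRepulsivePotential F f m) {a b : ℝ} (hab : a ≤ b) :
    ∃ c ∈ Icc a b, dslope F a b = f c := by
  rcases hab.eq_or_lt with rfl | hab
  · exact ⟨a, left_mem_Icc.2 le_rfl, by rw [dslope_same, (h.hasDerivAt a).deriv]⟩
  · obtain ⟨c, hc, hslope⟩ := exists_hasDerivAt_eq_slope F f hab
      (fun x _ => (h.hasDerivAt x).continuousAt.continuousWithinAt) fun x _ => h.hasDerivAt x
    exact ⟨c, Ioo_subset_Icc_self hc, by rw [dslope_of_ne _ hab.ne', slope_def_field, hslope]⟩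

lemma force_pos (h : IsRepulsivePotential F f m) (hv : m ≤ v) : 0 < f v :=
  h.pos.trans_le (h.monotoneOn self_mem_Ici hv hv)

lemma dslope_pos (h : IsRepulsivePotential F f m) (hv : m ≤ v) : 0 < dslope F m v := by
  obtain ⟨c, hc, heq⟩ := h.exists_dslope_eq hv
  exact heq ▸ h.force_pos hc.1

lemma dslope_le (h : IsRepulsivePotential F f m) (hv : m ≤ v) : dslope F m v ≤ f v := by
  obtain ⟨c, hc, heq⟩ := h.exists_dslope_eq hv
  exact heq ▸ h.monotoneOn hc.1 hv hc.2

lemma half_force_midpoint_le_dslope (h : IsRepulsivePotential F f m) (hv : m ≤ v) :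
    f ((m + v) / 2) / 2 ≤ dslope F m v := by
  set c := (m + v) / 2 with hc
  have hmc : m ≤ c := by linarith
  obtain ⟨d, hd, hdv⟩ := h.exists_dslope_eq (show c ≤ v by linarith)
  have hfd : f c ≤ f d := h.monotoneOn hmc (hmc.trans hd.1) hd.1
  rcases hv.eq_or_lt with rfl | hlt
  · rw [dslope_same, (h.hasDerivAt m).deriv, hc, add_self_div_two]
    linarith [h.pos]
  · have hleft : (c - m) * dslope F m c = F c - F m := sub_smul_dslope F m c
    have hright : (v - c) * dslope F c v = F v - F c := sub_smul_dslope F c v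
    have hall : (v - m) * dslope F m v = F v - F m := sub_smul_dslope F m v
    have hpos : 0 < dslope F m c := h.dslope_pos hmc
    have hgain : (v - c) * f c ≤ (v - m) * dslope F m v := by
      rw [hall, ← sub_add_sub_cancel (F v) (F c), ← hright, ← hleft, hdv]
      exact le_add_of_le_of_nonneg (mul_le_mul_of_nonneg_left hfd (by linarith))
        (mul_nonneg (sub_nonneg.2 hmc) hpos.le)
    refine le_of_mul_le_mul_left (le_of_eq_of_le ?_ hgain) (sub_pos.2 hlt)
    rw [hc]
    ring

lemma phaseSpeed_pos (h : IsRepulsivePotential F f m) (s : ℝ) : 0 < phaseSpeed F m s :=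
  Real.sqrt_pos.2 (half_pos (h.dslope_pos (le_add_of_nonneg_right (sq_nonneg s))))

lemma continuous_potential (h : IsRepulsivePotential F f m) : Continuous F :=
  continuous_iff_continuousAt.2 fun v => (h.hasDerivAt v).continuousAt

lemma continuous_phaseSpeed (h : IsRepulsivePotential F f m) : Continuous (phaseSpeed F m) := by
  have hslope : Continuous (dslope F m) := by
    rw [← continuousOn_univ, continuousOn_dslope univ_mem]
    exact ⟨h.continuous_potential.continuousOn, (h.hasDerivAt m).differentiableAt⟩
  unfold phaseSpeed
  fun_prop

lemma continuous_inv_phaseSpeed (h : IsRepulsivePotential F f m) :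
    Continuous fun s => (phaseSpeed F m s)⁻¹ :=
  h.continuous_phaseSpeed.inv₀ fun s => (h.phaseSpeed_pos s).ne'

lemma sq_two_mul_mul_phaseSpeed (h : IsRepulsivePotential F f m) (s : ℝ) :
    (2 * s * phaseSpeed F m s) ^ 2 = 2 * (F (m + s ^ 2) - F m) := by
  have hslope : s ^ 2 * dslope F m (m + s ^ 2) = F (m + s ^ 2) - F m := by
    rw [← sub_smul_dslope F m (m + s ^ 2), add_sub_cancel_left, smul_eq_mul]
  have hpos := h.dslope_pos (le_add_of_nonneg_right (sq_nonneg s))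
  rw [mul_pow, phaseSpeed, Real.sq_sqrt (half_pos hpos).le, ← hslope]
  ring

lemma hasDerivAt_two_mul_mul_phaseSpeed (h : IsRepulsivePotential F f m) (s : ℝ) :
    HasDerivAt (fun s => 2 * s * phaseSpeed F m s)
      (f (m + s ^ 2) * (phaseSpeed F m s)⁻¹) s := by
  have hw : Continuous fun s => 2 * s * phaseSpeed F m s :=
    (continuous_const.mul continuous_id).mul h.continuous_phaseSpeed
  have hg : Continuous fun s => f (m + s ^ 2) * (phaseSpeed F m s)⁻¹ :=
    (h.continuous_force.comp (by fun_prop)).mul h.continuous_inv_phaseSpeed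
  -- The energy identity degenerates at `s = 0`, where the derivative is found by continuity.
  refine hasDerivAt_of_hasDerivAt_of_ne' (x := 0)
    (g := fun s => f (m + s ^ 2) * (phaseSpeed F m s)⁻¹) (fun y hy => ?_)
    hw.continuousAt hg.continuousAt s
  have hspeed := (h.phaseSpeed_pos y).ne'
  have hv : HasDerivAt (fun s => m + s ^ 2) (2 * y) y := by
    simpa using (hasDerivAt_pow 2 y).const_add m
  have henergy : HasDerivAt (fun s => 2 * (F (m + s ^ 2) - F m))
      (2 * (f (m + y ^ 2) * (2 * y))) y :=
    (((h.hasDerivAt _).comp y hv).sub_const _).const_mul 2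
  refine (hasDerivAt_of_sq_eq hw.continuousAt (by positivity) henergy
    h.sq_two_mul_mul_phaseSpeed).congr_deriv ?_
  field_simp

lemma hasStrictDerivAt_phaseTime (h : IsRepulsivePotential F f m) (s : ℝ) :
    HasStrictDerivAt (phaseTime F m) (phaseSpeed F m s)⁻¹ s :=
  h.continuous_inv_phaseSpeed.integral_hasStrictDerivAt 0 s

lemma strictMono_phaseTime (h : IsRepulsivePotential F f m) : StrictMono (phaseTime F m) :=
  strictMono_of_hasDerivAt_pos (fun s => (h.hasStrictDerivAt_phaseTime s).hasDerivAt)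
    fun s => inv_pos.2 (h.phaseSpeed_pos s)

lemma abs_phaseTime (h : IsRepulsivePotential F f m) (s : ℝ) :
    |phaseTime F m s| = phaseTime F m |s| := by
  have hmono := h.strictMono_phaseTime.monotone
  rcases le_total 0 s with hs | hs
  · rw [abs_of_nonneg hs, abs_of_nonneg (phaseTime_zero F m ▸ hmono hs)]
  · rw [abs_of_nonpos hs, abs_of_nonpos (phaseTime_zero F m ▸ hmono hs), phaseTime_neg]

lemma phaseTime_lt_blowupTime (h : IsRepulsivePotential F f m)
    (hfin : FiniteBlowupTime F m) (s : ℝ) :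
    phaseTime F m s < blowupTime F m :=
  (h.strictMono_phaseTime (lt_add_one s)).trans_le <|
    h.strictMono_phaseTime.monotone.ge_of_tendsto
      (intervalIntegral_tendsto_integral_Ioi 0 hfin tendsto_id) _

lemma range_phaseTime (h : IsRepulsivePotential F f m)
    (hfin : FiniteBlowupTime F m) :
    range (phaseTime F m) = Ioo (-blowupTime F m) (blowupTime F m) := by
  refine Subset.antisymm ?_ fun x hx => ?_
  · rintro _ ⟨s, rfl⟩
    exact abs_lt.1 (h.abs_phaseTime s ▸ h.phaseTime_lt_blowupTime hfin _)
  · have hcont : Continuous (phaseTime F m) := continuous_iff_continuousAt.2 fun s =>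
      (h.hasStrictDerivAt_phaseTime s).hasDerivAt.continuousAt
    have hexceed : ∀ y < blowupTime F m, ∃ s, y < phaseTime F m s := fun y hy =>
      ((intervalIntegral_tendsto_integral_Ioi 0 hfin tendsto_id).eventually
        (lt_mem_nhds hy)).exists
    obtain ⟨s, hs⟩ := hexceed x hx.2
    obtain ⟨r, hr⟩ := hexceed (-x) (by linarith [hx.1])
    refine mem_range_of_exists_le_of_exists_ge hcont ⟨-r, ?_⟩ ⟨s, hs.le⟩
    rw [phaseTime_neg]
    linarith

lemma phase_phaseTime (h : IsRepulsivePotential F f m) (s : ℝ) :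
    phase F m (phaseTime F m s) = s :=
  Function.leftInverse_invFun h.strictMono_phaseTime.injective s

variable {x : ℝ}

lemma phaseTime_phase (h : IsRepulsivePotential F f m)
    (hfin : FiniteBlowupTime F m)
    (hx : x ∈ Ioo (-blowupTime F m) (blowupTime F m)) : phaseTime F m (phase F m x) = x :=
  Function.invFun_eq (mem_range.1 (h.range_phaseTime hfin ▸ hx))

lemma phase_neg (h : IsRepulsivePotential F f m)
    (hfin : FiniteBlowupTime F m)
    (hx : x ∈ Ioo (-blowupTime F m) (blowupTime F m)) : phase F m (-x) = -phase F m x := by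
  conv_lhs => rw [← h.phaseTime_phase hfin hx, ← phaseTime_neg, h.phase_phaseTime]

lemma hasDerivAt_phase (h : IsRepulsivePotential F f m)
    (hfin : FiniteBlowupTime F m)
    (hx : x ∈ Ioo (-blowupTime F m) (blowupTime F m)) :
    HasDerivAt (phase F m) (phaseSpeed F m (phase F m x)) x := by
  have hinv := (h.hasStrictDerivAt_phaseTime (phase F m x)).to_local_left_inverse
    (inv_pos.2 (h.phaseSpeed_pos _)).ne' (Eventually.of_forall h.phase_phaseTime)
  simpa only [h.phaseTime_phase hfin hx, inv_inv] using hinv.hasDerivAt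

theorem isEvenSolution (h : IsRepulsivePotential F f m)
    (hfin : FiniteBlowupTime F m) :
    IsEvenSolution f (blowupTime F m) (fun x => m + phase F m x ^ 2)
      (fun x => 2 * phase F m x * phaseSpeed F m (phase F m x)) where
  even x hx := by rw [h.phase_neg hfin hx, neg_sq]
  hasDerivAt x hx := by
    simpa using ((h.hasDerivAt_phase hfin hx).pow 2).const_add m
  hasDerivAt_deriv x hx := by
    refine ((h.hasDerivAt_two_mul_mul_phaseSpeed _).comp x
      (h.hasDerivAt_phase hfin hx)).congr_deriv ?_
    rw [inv_mul_cancel_right₀ (h.phaseSpeed_pos _).ne']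

lemma blowupTime_sub_abs (h : IsRepulsivePotential F f m)
    (hfin : FiniteBlowupTime F m)
    (hx : x ∈ Ioo (-blowupTime F m) (blowupTime F m)) :
    blowupTime F m - |x| = ∫ t in Ioi |phase F m x|, (phaseSpeed F m t)⁻¹ := by
  rw [← blowupTime_sub_phaseTime hfin (abs_nonneg _), ← h.abs_phaseTime,
    h.phaseTime_phase hfin hx]

lemma continuousAt_phaseSpeed_base (h : IsRepulsivePotential F f m) {s : ℝ} (hs : s ≠ 0) :
    ContinuousAt (fun m => phaseSpeed F m s) m := by
  have hF := h.continuous_potential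
  have heq : (fun m => phaseSpeed F m s) = fun m => √((F (m + s ^ 2) - F m) / s ^ 2 / 2) := by
    funext m
    rw [phaseSpeed, dslope_of_ne _ (by simpa using hs), slope_def_field, add_sub_cancel_left]
  rw [heq]
  exact Continuous.continuousAt (by fun_prop)

end IsRepulsivePotential

end Quadrature

section StableForce

/-- A potential for `stableForce`. -/
noncomputable def stablePotential (ϑ v : ℝ) : ℝ := v ^ (2 + ϑ) / (2 + ϑ) - v ^ 2 / 2

/-- The branching mechanism `-a v + b v ^ (1 + ϑ)` normalized to `a = b = 1`. -/
noncomputable def stableForce (ϑ v : ℝ) : ℝ := v ^ (1 + ϑ) - v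

variable {ϑ v m s : ℝ}

lemma stableForce_eq_mul (hv : 0 < v) : stableForce ϑ v = v * (v ^ ϑ - 1) := by
  rw [stableForce, Real.rpow_add hv, Real.rpow_one, mul_sub_one]

lemma stableForce_eq_rpow_mul (hv : 0 < v) :
    stableForce ϑ v = v ^ (1 + ϑ) * (1 - v⁻¹ ^ ϑ) := by
  rw [stableForce_eq_mul hv, Real.rpow_add hv, Real.rpow_one, Real.inv_rpow hv.le, mul_assoc,
    mul_one_sub (v ^ ϑ), mul_inv_cancel₀ (Real.rpow_pos_of_pos hv ϑ).ne']

lemma sub_one_mul_rpow_eq (hv : 0 < v) : (v - 1) * v ^ ϑ = v ^ (1 + ϑ) * (1 - v⁻¹) := by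
  rw [Real.rpow_add hv, Real.rpow_one]
  field_simp

lemma min_mul_one_sub_le_one_sub_rpow (hϑ : 0 ≤ ϑ) (hv₀ : 0 ≤ v) (hv₁ : v ≤ 1) :
    min ϑ 1 * (1 - v) ≤ 1 - v ^ ϑ := by
  rcases le_total ϑ 1 with h | h
  · have := rpow_one_add_le_one_add_mul_self (s := v - 1) (by linarith) hϑ h
    rw [add_sub_cancel] at this
    rw [min_eq_left h]
    linarith
  · rw [min_eq_right h]
    linarith [Real.rpow_le_self_of_le_one hv₀ hv₁ h]

lemma stableForce_le (hϑ : 0 ≤ ϑ) (hv : 1 ≤ v) :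
    stableForce ϑ v ≤ (1 + ϑ) * ((v - 1) * v ^ ϑ) := by
  have hv₀ : 0 < v := one_pos.trans_le hv
  have hbernoulli : 1 - v⁻¹ ^ ϑ ≤ (1 + ϑ) * (1 - v⁻¹) := by
    have h := one_add_mul_self_le_rpow_one_add (s := v⁻¹ - 1) (p := 1 + ϑ)
      (by linarith [inv_pos.2 hv₀]) (by linarith)
    have hle : v⁻¹ ^ (1 + ϑ) ≤ v⁻¹ ^ ϑ :=
      Real.rpow_le_rpow_of_exponent_ge (inv_pos.2 hv₀) (inv_le_one_of_one_le₀ hv) (by linarith)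
    rw [add_sub_cancel] at h
    linarith
  rw [stableForce_eq_rpow_mul hv₀, sub_one_mul_rpow_eq hv₀, mul_left_comm]
  gcongr

lemma le_stableForce (hϑ : 0 ≤ ϑ) (hv : 1 ≤ v) :
    min ϑ 1 * ((v - 1) * v ^ ϑ) ≤ stableForce ϑ v := by
  have hv₀ : 0 < v := one_pos.trans_le hv
  rw [stableForce_eq_rpow_mul hv₀, sub_one_mul_rpow_eq hv₀, mul_left_comm]
  gcongr
  exact min_mul_one_sub_le_one_sub_rpow hϑ (inv_pos.2 hv₀).le (inv_le_one_of_one_le₀ hv)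

lemma continuous_stableForce (hϑ : 0 < ϑ) : Continuous (stableForce ϑ) :=
  (Real.continuous_rpow_const (by linarith)).sub continuous_id

lemma hasDerivAt_stablePotential (hϑ : 0 < ϑ) (v : ℝ) :
    HasDerivAt (stablePotential ϑ) (stableForce ϑ v) v := by
  have hrpow : HasDerivAt (fun v : ℝ => v ^ (2 + ϑ)) ((2 + ϑ) * v ^ (2 + ϑ - 1)) v :=
    Real.hasDerivAt_rpow_const (Or.inr (by linarith))
  refine ((hrpow.div_const (2 + ϑ)).sub ((hasDerivAt_pow 2 v).div_const 2)).congr_deriv ?_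
  rw [mul_div_cancel_left₀ _ (by positivity), show 2 + ϑ - 1 = 1 + ϑ by ring, stableForce]
  simp

lemma isRepulsivePotential_stable (hϑ : 0 < ϑ) (hm : 1 < m) :
    IsRepulsivePotential (stablePotential ϑ) (stableForce ϑ) m where
  hasDerivAt := hasDerivAt_stablePotential hϑ
  continuous_force := continuous_stableForce hϑ
  monotoneOn v hv w _ hvw := by
    have hv₁ : 1 ≤ v := hm.le.trans hv
    have hv₀ : 0 < v := one_pos.trans_le hv₁
    rw [stableForce_eq_mul hv₀, stableForce_eq_mul (hv₀.trans_le hvw)]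
    have := Real.one_le_rpow hv₁ hϑ.le
    gcongr
    linarith
  pos := by
    rw [stableForce_eq_mul (one_pos.trans hm)]
    exact mul_pos (one_pos.trans hm) (sub_pos.2 (Real.one_lt_rpow hm hϑ))

/-- The constant in the upper bound `phaseSpeed_stable_le`. -/
noncomputable def upperRate (ϑ : ℝ) : ℝ := √((1 + ϑ) / 2)

/-- The constant in the lower bound `le_phaseSpeed_stable`. -/
noncomputable def lowerRate (ϑ : ℝ) : ℝ := √(min ϑ 1 / (8 * 2 ^ ϑ))

lemma upperRate_pos (hϑ : 0 < ϑ) : 0 < upperRate ϑ := Real.sqrt_pos.2 (by positivity)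

lemma lowerRate_pos (hϑ : 0 < ϑ) : 0 < lowerRate ϑ := Real.sqrt_pos.2 (by positivity)

lemma sqrt_mul_mul_rpow {c u : ℝ} (hc : 0 ≤ c) (hu : 0 ≤ u) (hv : 0 ≤ v) :
    √(c * (u * v ^ ϑ)) = √c * (u ^ (1 / 2 : ℝ) * v ^ (ϑ / 2)) := by
  rw [Real.sqrt_mul hc, Real.sqrt_mul hu, Real.sqrt_eq_rpow u, Real.sqrt_eq_rpow (v ^ ϑ),
    ← Real.rpow_mul hv, mul_one_div]

lemma phaseSpeed_stable_le (hϑ : 0 < ϑ) (hm : 1 < m) (s : ℝ) :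
    phaseSpeed (stablePotential ϑ) m s ≤
      upperRate ϑ * ((m - 1 + s ^ 2) ^ (1 / 2 : ℝ) * (m + s ^ 2) ^ (ϑ / 2)) := by
  have hs := sq_nonneg s
  rw [upperRate, ← sqrt_mul_mul_rpow (by positivity) (by linarith) (by linarith), phaseSpeed]
  refine Real.sqrt_le_sqrt ?_
  have hslope := ((isRepulsivePotential_stable hϑ hm).dslope_le (le_add_of_nonneg_right hs)).trans
    (stableForce_le hϑ.le (by linarith : 1 ≤ m + s ^ 2))
  rw [show m - 1 + s ^ 2 = m + s ^ 2 - 1 by ring]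
  linarith

lemma le_phaseSpeed_stable (hϑ : 0 < ϑ) (hm : 1 < m) (s : ℝ) :
    lowerRate ϑ * ((m - 1 + s ^ 2) ^ (1 / 2 : ℝ) * (m + s ^ 2) ^ (ϑ / 2)) ≤
      phaseSpeed (stablePotential ϑ) m s := by
  have hs := sq_nonneg s
  set v := m + s ^ 2
  have hv₀ : 0 < v := by linarith
  have hslope := (isRepulsivePotential_stable hϑ hm).half_force_midpoint_le_dslope
    (le_add_of_nonneg_right hs)
  have hmid := le_stableForce hϑ.le (by linarith : 1 ≤ (m + v) / 2)
  have hhalf : (v - 1) / 2 * (v / 2) ^ ϑ ≤ ((m + v) / 2 - 1) * ((m + v) / 2) ^ ϑ := by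
    gcongr <;> linarith
  rw [lowerRate, show m - 1 + s ^ 2 = v - 1 by ring,
    ← sqrt_mul_mul_rpow (by positivity) (by linarith) hv₀.le, phaseSpeed]
  refine Real.sqrt_le_sqrt ?_
  calc min ϑ 1 / (8 * 2 ^ ϑ) * ((v - 1) * v ^ ϑ)
      = min ϑ 1 * ((v - 1) / 2 * (v / 2) ^ ϑ) / 4 := by
        rw [Real.div_rpow hv₀.le zero_le_two]
        field_simp
        ring
    _ ≤ min ϑ 1 * (((m + v) / 2 - 1) * ((m + v) / 2) ^ ϑ) / 4 := by gcongr
    _ ≤ dslope (stablePotential ϑ) m v / 2 := by linarith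

end StableForce

section TailIntegrals

variable {n p q r s t : ℝ}

lemma integral_Ioi_add_rpow (hp : 0 < p) (hs : 0 < s + r) :
    ∫ t in Ioi s, (t + r) ^ (-(1 + p)) = (s + r) ^ (-p) / p := by
  have hshift := (measurePreserving_add_right volume r).setIntegral_preimage_emb
    (measurableEmbedding_addRight r) (fun t : ℝ => t ^ (-(1 + p))) (Ioi (s + r))
  rw [preimage_add_const_Ioi, add_sub_cancel_right] at hshift
  rw [hshift, integral_Ioi_rpow_of_lt (by linarith) hs, show -(1 + p) + 1 = -p by ring,
    neg_div_neg_eq]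

lemma rpow_neg_add_sqrt (ht : 0 ≤ t) :
    (t + √n) ^ (-q) = ((t + √n) ^ 2) ^ (-(q / 2)) := by
  rw [← Real.rpow_natCast_mul (by positivity)]
  congr 1
  push_cast
  ring

lemma rpow_neg_add_sqrt_le (hn : 0 < n) (ht : 0 ≤ t) (hq : 0 ≤ q) :
    (t + √n) ^ (-q) ≤ (n + t ^ 2) ^ (-(q / 2)) := by
  rw [rpow_neg_add_sqrt ht]
  refine Real.rpow_le_rpow_of_nonpos (by positivity) ?_ (by linarith)
  nlinarith [Real.sq_sqrt hn.le, mul_nonneg ht (Real.sqrt_nonneg n)]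

lemma rpow_neg_add_sq_le (hn : 0 < n) (ht : 0 ≤ t) (hq : 0 ≤ q) :
    (n + t ^ 2) ^ (-(q / 2)) ≤ 2 ^ (q / 2) * (t + √n) ^ (-q) := by
  have hsq : (t + √n) ^ 2 / 2 ≤ n + t ^ 2 := by
    linarith [add_sq_le (a := t) (b := √n), Real.sq_sqrt hn.le]
  have hpos : 0 < (t + √n) ^ 2 := by positivity
  rw [rpow_neg_add_sqrt ht]
  calc (n + t ^ 2) ^ (-(q / 2)) ≤ ((t + √n) ^ 2 / 2) ^ (-(q / 2)) :=
        Real.rpow_le_rpow_of_nonpos (by positivity) hsq (by linarith)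
    _ = 2 ^ (q / 2) * ((t + √n) ^ 2) ^ (-(q / 2)) := by
        rw [Real.div_rpow hpos.le zero_le_two, Real.rpow_neg zero_le_two, div_inv_eq_mul, mul_comm]

lemma integrableOn_Ioi_rpow_neg_add_sq (hn : 0 < n) (hp : 0 < p) (hs : 0 ≤ s) :
    IntegrableOn (fun t => (n + t ^ 2) ^ (-((1 + p) / 2))) (Ioi s) := by
  have hdom : IntegrableOn (fun t => 2 ^ ((1 + p) / 2) * (t + √n) ^ (-(1 + p))) (Ioi s) :=
    (integrableOn_add_rpow_Ioi_of_lt (by linarith)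
      (by linarith [Real.sqrt_pos.2 hn])).const_mul _
  refine hdom.mono' (Measurable.aestronglyMeasurable (by fun_prop))
    ((ae_restrict_iff' measurableSet_Ioi).2 <| .of_forall fun t ht => ?_)
  have ht₀ : 0 ≤ t := hs.trans (mem_Ioi.1 ht).le
  rw [Real.norm_of_nonneg (by positivity)]
  exact rpow_neg_add_sq_le hn ht₀ (by linarith)

lemma integral_Ioi_rpow_neg_add_sq_le (hn : 0 < n) (hp : 0 < p) (hs : 0 ≤ s) :
    ∫ t in Ioi s, (n + t ^ 2) ^ (-((1 + p) / 2)) ≤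
      2 ^ ((1 + p) / 2) / p * (n + s ^ 2) ^ (-(p / 2)) := by
  have hsn : 0 < s + √n := by positivity
  calc ∫ t in Ioi s, (n + t ^ 2) ^ (-((1 + p) / 2))
      ≤ ∫ t in Ioi s, 2 ^ ((1 + p) / 2) * (t + √n) ^ (-(1 + p)) :=
        setIntegral_mono_on (integrableOn_Ioi_rpow_neg_add_sq hn hp hs)
          ((integrableOn_add_rpow_Ioi_of_lt (by linarith) (by linarith)).const_mul _)
          measurableSet_Ioi fun t ht =>
            rpow_neg_add_sq_le hn (hs.trans (mem_Ioi.1 ht).le) (by linarith)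
    _ = 2 ^ ((1 + p) / 2) / p * (s + √n) ^ (-p) := by
        rw [integral_const_mul, integral_Ioi_add_rpow hp hsn]
        ring
    _ ≤ 2 ^ ((1 + p) / 2) / p * (n + s ^ 2) ^ (-(p / 2)) := by
        gcongr
        exact rpow_neg_add_sqrt_le hn hs hp.le

lemma le_integral_Ioi_rpow_neg_add_sq (hn : 0 < n) (hp : 0 < p) (hs : 0 ≤ s) :
    2 ^ (-(p / 2)) / p * (n + s ^ 2) ^ (-(p / 2)) ≤
      ∫ t in Ioi s, (n + t ^ 2) ^ (-((1 + p) / 2)) := by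
  have hsn : 0 < s + √n := by positivity
  calc 2 ^ (-(p / 2)) / p * (n + s ^ 2) ^ (-(p / 2))
      ≤ 2 ^ (-(p / 2)) / p * (2 ^ (p / 2) * (s + √n) ^ (-p)) := by
        gcongr
        exact rpow_neg_add_sq_le hn hs hp.le
    _ = (s + √n) ^ (-p) / p := by
        rw [Real.rpow_neg zero_le_two]
        field_simp
    _ = ∫ t in Ioi s, (t + √n) ^ (-(1 + p)) := (integral_Ioi_add_rpow hp hsn).symm
    _ ≤ ∫ t in Ioi s, (n + t ^ 2) ^ (-((1 + p) / 2)) :=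
        setIntegral_mono_on (integrableOn_add_rpow_Ioi_of_lt (by linarith) (by linarith))
          (integrableOn_Ioi_rpow_neg_add_sq hn hp hs) measurableSet_Ioi fun t ht =>
            rpow_neg_add_sqrt_le hn (hs.trans (mem_Ioi.1 ht).le) (by linarith)

end TailIntegrals

section StableBlowupTime

variable {ϑ m p s t r R : ℝ}

lemma inv_phaseSpeed_stable_le (hϑ : 0 < ϑ) (hm : 1 < m) (hp₀ : 0 ≤ p) (hp : p ≤ ϑ)
    (hs : 0 ≤ s) (hst : s ≤ t) :
    (phaseSpeed (stablePotential ϑ) m t)⁻¹ ≤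
      (lowerRate ϑ)⁻¹ * (m + s ^ 2) ^ (-((ϑ - p) / 2)) *
        (m - 1 + t ^ 2) ^ (-((1 + p) / 2)) := by
  have hrate := lowerRate_pos hϑ
  have hu : 0 < m - 1 + t ^ 2 := add_pos_of_pos_of_nonneg (by linarith) (sq_nonneg t)
  have hv : 0 < m + t ^ 2 := by positivity
  calc (phaseSpeed (stablePotential ϑ) m t)⁻¹
      ≤ (lowerRate ϑ * ((m - 1 + t ^ 2) ^ (1 / 2 : ℝ) * (m + t ^ 2) ^ (ϑ / 2)))⁻¹ := by
        gcongr
        exact le_phaseSpeed_stable hϑ hm t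
    _ = (lowerRate ϑ)⁻¹ * ((m - 1 + t ^ 2) ^ (-(1 / 2 : ℝ)) *
          ((m + t ^ 2) ^ (-(p / 2)) * (m + t ^ 2) ^ (-((ϑ - p) / 2)))) := by
        rw [← Real.rpow_add hv, show -(p / 2) + -((ϑ - p) / 2) = -(ϑ / 2) by ring,
          Real.rpow_neg hu.le, Real.rpow_neg hv.le, mul_inv, mul_inv]
    _ ≤ (lowerRate ϑ)⁻¹ * ((m - 1 + t ^ 2) ^ (-(1 / 2 : ℝ)) *
          ((m - 1 + t ^ 2) ^ (-(p / 2)) * (m + s ^ 2) ^ (-((ϑ - p) / 2)))) := by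
        have hle : (m + t ^ 2) ^ (-(p / 2)) ≤ (m - 1 + t ^ 2) ^ (-(p / 2)) :=
          Real.rpow_le_rpow_of_nonpos hu (by linarith) (by linarith)
        have hle' : (m + t ^ 2) ^ (-((ϑ - p) / 2)) ≤ (m + s ^ 2) ^ (-((ϑ - p) / 2)) :=
          Real.rpow_le_rpow_of_nonpos (by positivity) (by gcongr) (by linarith)
        gcongr
    _ = (lowerRate ϑ)⁻¹ * (m + s ^ 2) ^ (-((ϑ - p) / 2)) *
          (m - 1 + t ^ 2) ^ (-((1 + p) / 2)) := by
        rw [← mul_assoc (_ ^ (-(1 / 2 : ℝ))), ← Real.rpow_add hu,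
          show -(1 / 2) + -(p / 2) = -((1 + p) / 2) by ring]
        ring

lemma le_inv_phaseSpeed_stable (hϑ : 0 < ϑ) (hm : 1 < m) (t : ℝ) :
    (upperRate ϑ)⁻¹ * ((m - 1 + t ^ 2) ^ (-(1 / 2 : ℝ)) * (m + t ^ 2) ^ (-(ϑ / 2))) ≤
      (phaseSpeed (stablePotential ϑ) m t)⁻¹ := by
  have hu : 0 < m - 1 + t ^ 2 := add_pos_of_pos_of_nonneg (by linarith) (sq_nonneg t)
  rw [Real.rpow_neg hu.le, Real.rpow_neg (by positivity), ← mul_inv, ← mul_inv]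
  exact inv_anti₀ ((isRepulsivePotential_stable hϑ hm).phaseSpeed_pos t)
    (phaseSpeed_stable_le hϑ hm t)

lemma finiteBlowupTime_stable (hϑ : 0 < ϑ) (hm : 1 < m) :
    FiniteBlowupTime (stablePotential ϑ) m := by
  have h := isRepulsivePotential_stable hϑ hm
  refine ((integrableOn_Ioi_rpow_neg_add_sq (sub_pos.2 hm) hϑ le_rfl).const_mul
    ((lowerRate ϑ)⁻¹ * (m + 0 ^ 2) ^ (-((ϑ - ϑ) / 2)))).mono'
    h.continuous_inv_phaseSpeed.aestronglyMeasurable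
    ((ae_restrict_iff' measurableSet_Ioi).2 <| .of_forall fun t ht => ?_)
  rw [Real.norm_of_nonneg (inv_pos.2 (h.phaseSpeed_pos t)).le]
  exact inv_phaseSpeed_stable_le hϑ hm hϑ.le le_rfl le_rfl (mem_Ioi.1 ht).le

lemma integral_inv_phaseSpeed_stable_le (hϑ : 0 < ϑ) (hm : 1 < m) (hp₀ : 0 < p) (hp : p ≤ ϑ)
    (hs : 0 ≤ s) :
    ∫ t in Ioi s, (phaseSpeed (stablePotential ϑ) m t)⁻¹ ≤
      (lowerRate ϑ)⁻¹ * (2 ^ ((1 + p) / 2) / p) *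
        ((m - 1 + s ^ 2) ^ (-(p / 2)) * (m + s ^ 2) ^ (-((ϑ - p) / 2))) := by
  have hm₁ := sub_pos.2 hm
  have hrate := lowerRate_pos hϑ
  calc ∫ t in Ioi s, (phaseSpeed (stablePotential ϑ) m t)⁻¹
      ≤ ∫ t in Ioi s, (lowerRate ϑ)⁻¹ * (m + s ^ 2) ^ (-((ϑ - p) / 2)) *
          (m - 1 + t ^ 2) ^ (-((1 + p) / 2)) :=
        setIntegral_mono_on ((finiteBlowupTime_stable hϑ hm).mono_set (Ioi_subset_Ioi hs))
          ((integrableOn_Ioi_rpow_neg_add_sq hm₁ hp₀ hs).const_mul _) measurableSet_Ioi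
          fun t ht => inv_phaseSpeed_stable_le hϑ hm hp₀.le hp hs (mem_Ioi.1 ht).le
    _ ≤ (lowerRate ϑ)⁻¹ * (m + s ^ 2) ^ (-((ϑ - p) / 2)) *
          (2 ^ ((1 + p) / 2) / p * (m - 1 + s ^ 2) ^ (-(p / 2))) := by
        rw [integral_const_mul]
        gcongr
        exact integral_Ioi_rpow_neg_add_sq_le hm₁ hp₀ hs
    _ = _ := by ring

lemma le_integral_inv_phaseSpeed_stable (hϑ : 0 < ϑ) (hm : 1 < m) (hs : 0 ≤ s) :
    (upperRate ϑ)⁻¹ * (2 ^ (-(ϑ / 2)) / ϑ) * (m + s ^ 2) ^ (-(ϑ / 2)) ≤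
      ∫ t in Ioi s, (phaseSpeed (stablePotential ϑ) m t)⁻¹ := by
  have hm₀ : 0 < m := one_pos.trans hm
  have hrate := upperRate_pos hϑ
  calc (upperRate ϑ)⁻¹ * (2 ^ (-(ϑ / 2)) / ϑ) * (m + s ^ 2) ^ (-(ϑ / 2))
      ≤ (upperRate ϑ)⁻¹ * ∫ t in Ioi s, (m + t ^ 2) ^ (-((1 + ϑ) / 2)) := by
        rw [mul_assoc]
        gcongr
        exact le_integral_Ioi_rpow_neg_add_sq hm₀ hϑ hs
    _ = ∫ t in Ioi s, (upperRate ϑ)⁻¹ * (m + t ^ 2) ^ (-((1 + ϑ) / 2)) :=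
        (integral_const_mul _ _).symm
    _ ≤ ∫ t in Ioi s, (phaseSpeed (stablePotential ϑ) m t)⁻¹ := by
        refine setIntegral_mono_on
          ((integrableOn_Ioi_rpow_neg_add_sq hm₀ hϑ hs).const_mul _)
          ((finiteBlowupTime_stable hϑ hm).mono_set (Ioi_subset_Ioi hs)) measurableSet_Ioi
          fun t _ => le_trans ?_ (le_inv_phaseSpeed_stable hϑ hm t)
        rw [show -((1 + ϑ) / 2) = -(1 / 2) + -(ϑ / 2) by ring, Real.rpow_add (by positivity)]
        have hle : (m + t ^ 2) ^ (-(1 / 2 : ℝ)) ≤ (m - 1 + t ^ 2) ^ (-(1 / 2 : ℝ)) :=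
          Real.rpow_le_rpow_of_nonpos (add_pos_of_pos_of_nonneg (by linarith) (sq_nonneg t))
            (by linarith) (by norm_num)
        gcongr

lemma continuousOn_blowupTime_stable (hϑ : 0 < ϑ) :
    ContinuousOn (blowupTime (stablePotential ϑ)) (Ioi 1) := by
  refine continuousOn_of_forall_continuousAt fun m₀ hm₀ => ?_
  obtain ⟨m₁, hm₁, hm₁₀⟩ := exists_between (mem_Ioi.1 hm₀)
  have hnear : ∀ᶠ m in 𝓝 m₀, m₁ < m := lt_mem_nhds hm₁₀
  have hrate := lowerRate_pos hϑ
  refine continuousAt_of_dominated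
    (bound := fun t => (lowerRate ϑ)⁻¹ * (m₁ - 1 + t ^ 2) ^ (-((1 + ϑ) / 2)))
    ?_ ?_ ((integrableOn_Ioi_rpow_neg_add_sq (sub_pos.2 hm₁) hϑ le_rfl).const_mul _) ?_
  · filter_upwards [hnear] with m hm
    exact (isRepulsivePotential_stable hϑ
      (hm₁.trans hm)).continuous_inv_phaseSpeed.aestronglyMeasurable
  · filter_upwards [hnear] with m hm
    refine (ae_restrict_iff' measurableSet_Ioi).2 <| .of_forall fun t ht => ?_
    have hpos := (isRepulsivePotential_stable hϑ (hm₁.trans hm)).phaseSpeed_pos t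
    rw [Real.norm_of_nonneg (inv_pos.2 hpos).le]
    calc (phaseSpeed (stablePotential ϑ) m t)⁻¹
        ≤ (lowerRate ϑ)⁻¹ * (m - 1 + t ^ 2) ^ (-((1 + ϑ) / 2)) := by
          simpa using inv_phaseSpeed_stable_le hϑ (hm₁.trans hm) hϑ.le le_rfl le_rfl
            (mem_Ioi.1 ht).le
      _ ≤ (lowerRate ϑ)⁻¹ * (m₁ - 1 + t ^ 2) ^ (-((1 + ϑ) / 2)) := by
          have hle : (m - 1 + t ^ 2) ^ (-((1 + ϑ) / 2)) ≤
              (m₁ - 1 + t ^ 2) ^ (-((1 + ϑ) / 2)) :=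
            Real.rpow_le_rpow_of_nonpos
              (add_pos_of_pos_of_nonneg (sub_pos.2 hm₁) (sq_nonneg t)) (by linarith)
              (by linarith)
          gcongr
  · refine (ae_restrict_iff' measurableSet_Ioi).2 <| .of_forall fun t ht => ?_
    exact ((isRepulsivePotential_stable hϑ hm₀).continuousAt_phaseSpeed_base
      (mem_Ioi.1 ht).ne').inv₀ ((isRepulsivePotential_stable hϑ hm₀).phaseSpeed_pos t).ne'

lemma exists_blowupTime_stable_le (hϑ : 0 < ϑ) (hR : 0 < R) :
    ∃ m > 1, blowupTime (stablePotential ϑ) m ≤ R := by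
  have hlim : Tendsto (fun m : ℝ => (lowerRate ϑ)⁻¹ * (2 ^ ((1 + ϑ) / 2) / ϑ) *
      (m - 1) ^ (-(ϑ / 2))) atTop (𝓝 0) := by
    simpa [sub_eq_add_neg] using ((tendsto_rpow_neg_atTop (half_pos hϑ)).comp
      (tendsto_atTop_add_const_right atTop (-1) tendsto_id)).const_mul
        ((lowerRate ϑ)⁻¹ * (2 ^ ((1 + ϑ) / 2) / ϑ))
  obtain ⟨m, hm, hmR⟩ := ((eventually_gt_atTop 1).and (hlim.eventually (gt_mem_nhds hR))).exists
  refine ⟨m, hm, le_trans ?_ hmR.le⟩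
  simpa [blowupTime] using integral_inv_phaseSpeed_stable_le hϑ hm hϑ le_rfl le_rfl

lemma neg_log_le_blowupTime_stable (hϑ : 0 < ϑ) (hr₀ : 0 < r) (hr₁ : r ≤ 1) :
    (upperRate ϑ)⁻¹ * 3 ^ (-(ϑ / 2)) * -Real.log r ≤
      blowupTime (stablePotential ϑ) (1 + r ^ 2) := by
  have hm : 1 < 1 + r ^ 2 := lt_add_of_pos_right 1 (by positivity)
  have h := isRepulsivePotential_stable hϑ hm
  have hrate := upperRate_pos hϑ
  have hpointwise : ∀ t ∈ Icc (0 : ℝ) 1, (upperRate ϑ)⁻¹ * 3 ^ (-(ϑ / 2)) * (t + r)⁻¹ ≤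
      (phaseSpeed (stablePotential ϑ) (1 + r ^ 2) t)⁻¹ := fun t ⟨ht₀, ht₁⟩ => by
    have hu := rpow_neg_add_sqrt_le (q := 1) (pow_pos hr₀ 2) ht₀ zero_le_one
    have hv : (3 : ℝ) ^ (-(ϑ / 2)) ≤ (1 + r ^ 2 + t ^ 2) ^ (-(ϑ / 2)) :=
      Real.rpow_le_rpow_of_nonpos (by positivity) (by nlinarith) (by linarith)
    rw [Real.sqrt_sq hr₀.le, Real.rpow_neg_one] at hu
    refine le_trans ?_ (le_inv_phaseSpeed_stable hϑ hm t)
    rw [add_sub_cancel_left, mul_comm (_ ^ (-(1 / 2 : ℝ))), ← mul_assoc]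
    gcongr
  calc (upperRate ϑ)⁻¹ * 3 ^ (-(ϑ / 2)) * -Real.log r
      ≤ (upperRate ϑ)⁻¹ * 3 ^ (-(ϑ / 2)) * Real.log ((1 + r) / (0 + r)) := by
        rw [← Real.log_inv]
        gcongr
        rw [zero_add, inv_eq_one_div]
        gcongr
        linarith
    _ = ∫ t in (0 : ℝ)..1, (upperRate ϑ)⁻¹ * 3 ^ (-(ϑ / 2)) * (t + r)⁻¹ := by
        rw [intervalIntegral.integral_const_mul,
          intervalIntegral.integral_comp_add_right fun t => t⁻¹,
          integral_inv_of_pos (by linarith) (by linarith)]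
    _ ≤ phaseTime (stablePotential ϑ) (1 + r ^ 2) 1 := by
        refine intervalIntegral.integral_mono_on zero_le_one ?_
          (h.continuous_inv_phaseSpeed.intervalIntegrable 0 1) hpointwise
        refine ContinuousOn.intervalIntegrable_of_Icc zero_le_one ?_
        exact continuousOn_const.mul (ContinuousOn.inv₀ (by fun_prop)
          fun t ht => (add_pos_of_nonneg_of_pos ht.1 hr₀).ne')
    _ ≤ blowupTime (stablePotential ϑ) (1 + r ^ 2) :=
        (h.phaseTime_lt_blowupTime (finiteBlowupTime_stable hϑ hm) 1).le

lemma exists_le_blowupTime_stable (hϑ : 0 < ϑ) (hR : 0 < R) :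
    ∃ m > 1, R ≤ blowupTime (stablePotential ϑ) m := by
  set c := (upperRate ϑ)⁻¹ * 3 ^ (-(ϑ / 2))
  have hc : 0 < c := mul_pos (inv_pos.2 (upperRate_pos hϑ)) (by positivity)
  have h := neg_log_le_blowupTime_stable hϑ (Real.exp_pos (-(R / c)))
    (Real.exp_le_one_iff.2 (by simp only [Left.neg_nonpos_iff]; positivity))
  rw [Real.log_exp, neg_neg, mul_div_cancel₀ _ hc.ne'] at h
  exact ⟨_, lt_add_of_pos_right 1 (by positivity), h⟩

lemma exists_blowupTime_stable_eq (hϑ : 0 < ϑ) (hR : 0 < R) :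
    ∃ m > 1, blowupTime (stablePotential ϑ) m = R := by
  obtain ⟨m₀, hm₀, hle⟩ := exists_blowupTime_stable_le hϑ hR
  obtain ⟨m₁, hm₁, hge⟩ := exists_le_blowupTime_stable hϑ hR
  exact isPreconnected_Ioi.intermediate_value hm₀ hm₁ (continuousOn_blowupTime_stable hϑ)
    ⟨hle, hge⟩

end StableBlowupTime

section StableProfile

variable {ϑ m q s c d y : ℝ}

lemma rpow_inv_mul_rpow_neg_inv (hc : 0 < c) (hd : 0 < d) (q : ℝ) :
    c ^ q⁻¹ * d ^ (-q⁻¹) = (d / c) ^ (-q)⁻¹ := by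
  rw [inv_neg, Real.div_rpow hd.le hc.le, Real.rpow_neg hc.le, div_inv_eq_mul, mul_comm]

lemma rpow_inv_mul_rpow_neg_inv_le_iff (hc : 0 < c) (hd : 0 < d) (hy : 0 < y) (hq : 0 < q) :
    c ^ q⁻¹ * d ^ (-q⁻¹) ≤ y ↔ c * y ^ (-q) ≤ d := by
  rw [rpow_inv_mul_rpow_neg_inv hc hd,
    Real.rpow_inv_le_iff_of_neg (div_pos hd hc) hy (neg_lt_zero.2 hq), le_div_iff₀' hc]

lemma le_rpow_inv_mul_rpow_neg_inv_iff (hc : 0 < c) (hd : 0 < d) (hy : 0 < y) (hq : 0 < q) :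
    y ≤ c ^ q⁻¹ * d ^ (-q⁻¹) ↔ d ≤ c * y ^ (-q) := by
  rw [rpow_inv_mul_rpow_neg_inv hc hd,
    Real.le_rpow_inv_iff_of_neg hy (div_pos hd hc) (neg_lt_zero.2 hq), div_le_iff₀' hc]

lemma mul_rpow_mul_rpow_neg_le {u v p : ℝ} (hu : 0 < u) (huv : u ≤ v) (hp : p ≤ 2) :
    u * v ^ (ϑ / 2) * (u ^ (-(p / 2)) * v ^ (-((ϑ - p) / 2))) ≤ v := by
  have hv : 0 < v := hu.trans_le huv
  calc u * v ^ (ϑ / 2) * (u ^ (-(p / 2)) * v ^ (-((ϑ - p) / 2)))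
      = u ^ (1 : ℝ) * u ^ (-(p / 2)) * (v ^ (ϑ / 2) * v ^ (-((ϑ - p) / 2))) := by
        rw [Real.rpow_one]
        ring
    _ = u ^ (1 - p / 2) * v ^ (p / 2) := by
        rw [← Real.rpow_add hu, ← Real.rpow_add hv]
        ring_nf
    _ ≤ v ^ (1 - p / 2) * v ^ (p / 2) := by
        gcongr
        linarith
    _ = v := by rw [← Real.rpow_add hv, sub_add_cancel, Real.rpow_one]

lemma mul_phaseSpeed_stable_le (hϑ : 0 < ϑ) (hm : 1 < m) (s : ℝ) :
    s * phaseSpeed (stablePotential ϑ) m s ≤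
      upperRate ϑ * ((m - 1 + s ^ 2) * (m + s ^ 2) ^ (ϑ / 2)) := by
  have hu : 0 ≤ m - 1 + s ^ 2 := add_nonneg (by linarith) (sq_nonneg s)
  have hs : s ≤ √(m - 1 + s ^ 2) := Real.le_sqrt_of_sq_le (by linarith)
  have hspeed := (isRepulsivePotential_stable hϑ hm).phaseSpeed_pos s
  calc s * phaseSpeed (stablePotential ϑ) m s
      ≤ √(m - 1 + s ^ 2) *
          (upperRate ϑ * (√(m - 1 + s ^ 2) * (m + s ^ 2) ^ (ϑ / 2))) := by
        gcongr
        rw [Real.sqrt_eq_rpow]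
        exact phaseSpeed_stable_le hϑ hm s
    _ = upperRate ϑ * (√(m - 1 + s ^ 2) * √(m - 1 + s ^ 2) * (m + s ^ 2) ^ (ϑ / 2)) := by ring
    _ = upperRate ϑ * ((m - 1 + s ^ 2) * (m + s ^ 2) ^ (ϑ / 2)) := by rw [Real.mul_self_sqrt hu]

lemma exists_mul_integral_inv_phaseSpeed_stable_le (hϑ : 0 < ϑ) :
    ∃ K > 0, ∀ m > 1, ∀ s ≥ 0, 2 * s * phaseSpeed (stablePotential ϑ) m s *
      ∫ t in Ioi s, (phaseSpeed (stablePotential ϑ) m t)⁻¹ ≤ K * (m + s ^ 2) := by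
  have hlower := lowerRate_pos hϑ
  have hupper := upperRate_pos hϑ
  obtain ⟨p, hp₀, hpϑ, hp₂⟩ : ∃ p, 0 < p ∧ p ≤ ϑ ∧ p ≤ 2 :=
    ⟨min ϑ 2, lt_min hϑ two_pos, min_le_left _ _, min_le_right _ _⟩
  set B := (lowerRate ϑ)⁻¹ * (2 ^ ((1 + p) / 2) / p)
  refine ⟨2 * upperRate ϑ * B, by positivity, fun m hm s hs => ?_⟩
  have hspeed := mul_phaseSpeed_stable_le hϑ hm s
  have htail := integral_inv_phaseSpeed_stable_le hϑ hm hp₀ hpϑ hs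
  have hspeed₀ := (isRepulsivePotential_stable hϑ hm).phaseSpeed_pos s
  set u := m - 1 + s ^ 2
  set v := m + s ^ 2
  have hu : 0 < u := add_pos_of_pos_of_nonneg (sub_pos.2 hm) (sq_nonneg s)
  have huv : u ≤ v := by linarith
  calc 2 * s * phaseSpeed (stablePotential ϑ) m s *
        ∫ t in Ioi s, (phaseSpeed (stablePotential ϑ) m t)⁻¹
      ≤ 2 * s * phaseSpeed (stablePotential ϑ) m s *
          (B * (u ^ (-(p / 2)) * v ^ (-((ϑ - p) / 2)))) := by gcongr
    _ = 2 * (s * phaseSpeed (stablePotential ϑ) m s) *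
          (B * (u ^ (-(p / 2)) * v ^ (-((ϑ - p) / 2)))) := by ring
    _ ≤ 2 * (upperRate ϑ * (u * v ^ (ϑ / 2))) *
          (B * (u ^ (-(p / 2)) * v ^ (-((ϑ - p) / 2)))) := by gcongr
    _ = 2 * upperRate ϑ * B *
          (u * v ^ (ϑ / 2) * (u ^ (-(p / 2)) * v ^ (-((ϑ - p) / 2)))) := by ring
    _ ≤ 2 * upperRate ϑ * B * v := by
        gcongr
        exact mul_rpow_mul_rpow_neg_le hu huv hp₂

lemma exists_stable_profile (hϑ : 0 < ϑ) :
    ∃ c > 0, ∃ C > 0, ∃ K > 0, ∀ R > 0, ∃ v w : ℝ → ℝ, IsEvenSolution (stableForce ϑ) R v w ∧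
      ∀ x ∈ Ioo (-R) R, 1 ≤ v x ∧ c * (R - |x|) ^ (-(2 / ϑ)) ≤ v x ∧
        v x ≤ 1 + C * (R - |x|) ^ (-(2 / ϑ)) ∧ |w x| * (R - |x|) ≤ K * v x := by
  have hlower := lowerRate_pos hϑ
  have hupper := upperRate_pos hϑ
  obtain ⟨K, hK, hderiv⟩ := exists_mul_integral_inv_phaseSpeed_stable_le hϑ
  set c := (upperRate ϑ)⁻¹ * (2 ^ (-(ϑ / 2)) / ϑ) with hc
  set C := (lowerRate ϑ)⁻¹ * (2 ^ ((1 + ϑ) / 2) / ϑ) with hC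
  have hc₀ : 0 < c := by positivity
  have hC₀ : 0 < C := by positivity
  refine ⟨c ^ (2 / ϑ), by positivity, C ^ (2 / ϑ), by positivity, K, hK, fun R hR => ?_⟩
  obtain ⟨m, hm, rfl⟩ := exists_blowupTime_stable_eq hϑ hR
  have h := isRepulsivePotential_stable hϑ hm
  have hfin := finiteBlowupTime_stable hϑ hm
  refine ⟨_, _, h.isEvenSolution hfin, fun x hx => ?_⟩
  set φ := phase (stablePotential ϑ) m x
  have htail := h.blowupTime_sub_abs hfin hx
  have hd : 0 < blowupTime (stablePotential ϑ) m - |x| := sub_pos.2 (abs_lt.2 hx)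
  have hv : 0 < m - 1 + φ ^ 2 := add_pos_of_pos_of_nonneg (sub_pos.2 hm) (sq_nonneg φ)
  have hge := le_integral_inv_phaseSpeed_stable hϑ hm (abs_nonneg φ)
  have hle := integral_inv_phaseSpeed_stable_le hϑ hm hϑ le_rfl (abs_nonneg φ)
  have hw := hderiv m hm _ (abs_nonneg φ)
  rw [← htail, ← hc, sq_abs] at hge
  rw [← htail, ← hC, sq_abs, sub_self, zero_div, neg_zero, Real.rpow_zero, mul_one] at hle
  rw [← htail, sq_abs, phaseSpeed_abs] at hw
  rw [← rpow_inv_mul_rpow_neg_inv_le_iff hc₀ hd (by linarith) (half_pos hϑ), inv_div] at hge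
  rw [← le_rpow_inv_mul_rpow_neg_inv_iff hC₀ hd hv (half_pos hϑ), inv_div] at hle
  refine ⟨by linarith, hge, by linarith, ?_⟩
  rwa [abs_mul, abs_mul, abs_two, abs_of_pos (h.phaseSpeed_pos _)]

end StableProfile

section BlowupSolution

variable {a b ϑ A x y c q : ℝ} {h : ℝ → ℝ}

lemma rpow_mul_sq_sub_sq_rpow_neg (hx : |x| < A) (q : ℝ) :
    A ^ q * (A ^ 2 - x ^ 2) ^ (-q) = ((A ^ 2 - x ^ 2) / A) ^ (-q) := by
  have hA : 0 < A := (abs_nonneg x).trans_lt hx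
  have hsq : 0 < A ^ 2 - x ^ 2 := sub_pos.2 (sq_lt_sq' (abs_lt.1 hx).1 (abs_lt.1 hx).2)
  rw [Real.div_rpow hsq.le hA.le, Real.rpow_neg hA.le, div_inv_eq_mul, mul_comm]

lemma rpow_mul_sq_sub_sq_rpow_neg_le (hx : |x| < A) (hq : 0 ≤ q) :
    A ^ q * (A ^ 2 - x ^ 2) ^ (-q) ≤ (A - |x|) ^ (-q) := by
  have hx₀ := abs_nonneg x
  rw [rpow_mul_sq_sub_sq_rpow_neg hx, ← sq_abs x]
  refine Real.rpow_le_rpow_of_nonpos (sub_pos.2 hx) ?_ (neg_nonpos.2 hq)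
  rw [le_div_iff₀ (hx₀.trans_lt hx)]
  nlinarith

lemma sub_abs_rpow_neg_le (hx : |x| < A) (hq : 0 ≤ q) :
    (A - |x|) ^ (-q) ≤ 2 ^ q * (A ^ q * (A ^ 2 - x ^ 2) ^ (-q)) := by
  have hx₀ := abs_nonneg x
  have hA : 0 < A := hx₀.trans_lt hx
  have hsq : 0 < A ^ 2 - |x| ^ 2 := by nlinarith
  rw [rpow_mul_sq_sub_sq_rpow_neg hx, ← sq_abs x]
  calc (A - |x|) ^ (-q) ≤ ((A ^ 2 - |x| ^ 2) / A / 2) ^ (-q) := by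
        refine Real.rpow_le_rpow_of_nonpos (by positivity) ?_ (neg_nonpos.2 hq)
        rw [div_div, div_le_iff₀ (by positivity)]
        nlinarith
    _ = 2 ^ q * ((A ^ 2 - |x| ^ 2) / A) ^ (-q) := by
        rw [Real.div_rpow (div_pos hsq hA).le zero_le_two, Real.rpow_neg zero_le_two,
          div_inv_eq_mul, mul_comm]

lemma tendsto_atTop_of_mul_sub_abs_rpow_neg_le (hy : |y| = A) (hc : 0 < c) (hq : 0 < q)
    (hle : ∀ x ∈ Ioo (-A) A, c * (A - |x|) ^ (-q) ≤ h x) :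
    Tendsto h (𝓝[Ioo (-A) A] y) atTop := by
  have hdist : Tendsto (fun x => A - |x|) (𝓝[Ioo (-A) A] y) (𝓝[>] 0) := by
    refine tendsto_nhdsWithin_iff.2 ⟨?_, ?_⟩
    · have hcont : Continuous fun x : ℝ => A - |x| := by fun_prop
      exact (hcont.tendsto' y 0 (by rw [hy, sub_self])).mono_left nhdsWithin_le_nhds
    · exact eventually_mem_nhdsWithin.mono fun x hx => sub_pos.2 (abs_lt.2 hx)
  exact tendsto_atTop_mono' _ (eventually_mem_nhdsWithin.mono hle)
    (((tendsto_rpow_neg_nhdsGT_zero (neg_lt_zero.2 hq)).comp hdist).const_mul_atTop hc)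

lemma branching_mul_eq_stableForce (ha : 0 < a) (hb : 0 < b) (hϑ : ϑ ≠ 0) (hy : 0 ≤ y) :
    2 * (-a * ((a / b) ^ (1 / ϑ) * y) + b * ((a / b) ^ (1 / ϑ) * y) ^ (1 + ϑ)) =
      (a / b) ^ (1 / ϑ) * √(2 * a) ^ 2 * stableForce ϑ y := by
  have hz : 0 < (a / b) ^ (1 / ϑ) := by positivity
  have hzero : b * ((a / b) ^ (1 / ϑ)) ^ ϑ = a := by
    rw [← Real.rpow_mul (by positivity), one_div_mul_cancel hϑ, Real.rpow_one,
      mul_div_cancel₀ a hb.ne']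
  rw [stableForce, Real.mul_rpow hz.le hy, Real.rpow_add hz, Real.rpow_one,
    Real.sq_sqrt (by positivity)]
  linear_combination 2 * (a / b) ^ (1 / ϑ) * y ^ (1 + ϑ) * hzero

lemma exists_stable_solution (ha : 0 < a) (hb : 0 < b) (hϑ : 0 < ϑ) :
    ∃ c₁ > 0, ∃ c₂ > 0, ∃ c₃ > 0, ∀ A > 0, ∃ h w : ℝ → ℝ,
      IsEvenSolution (fun y => 2 * (-a * y + b * y ^ (1 + ϑ))) A h w ∧
      ∀ x ∈ Ioo (-A) A, (a / b) ^ (1 / ϑ) ≤ h x ∧ c₂ * (A - |x|) ^ (-(2 / ϑ)) ≤ h x ∧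
        h x ≤ (a / b) ^ (1 / ϑ) * (1 + c₁ * (A - |x|) ^ (-(2 / ϑ))) ∧
        |w x| * (A - |x|) ≤ c₃ * h x := by
  obtain ⟨c, hc, C, hC, K, hK, hprofile⟩ := exists_stable_profile hϑ
  set z := (a / b) ^ (1 / ϑ)
  set μ := √(2 * a)
  have hz₀ : 0 < z := by positivity
  have hμ₀ : 0 < μ := by positivity
  refine ⟨C * μ ^ (-(2 / ϑ)), by positivity, z * (c * μ ^ (-(2 / ϑ))), by positivity, K, hK,
    fun A hA => ?_⟩
  obtain ⟨v, w, hvw, hbounds⟩ := hprofile (μ * A) (by positivity)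
  refine ⟨_, _, hvw.rescale z hμ₀ fun x hx =>
    branching_mul_eq_stableForce ha hb hϑ.ne' (zero_le_one.trans (hbounds x hx).1),
    fun x hx => ?_⟩
  have hd : 0 < A - |x| := sub_pos.2 (abs_lt.2 hx)
  have hdist : μ * A - |μ * x| = μ * (A - |x|) := by
    rw [abs_mul, abs_of_pos hμ₀, mul_sub]
  have hmem : μ * x ∈ Ioo (-(μ * A)) (μ * A) := by
    rw [mem_Ioo, ← abs_lt, ← sub_pos, hdist]
    positivity
  obtain ⟨h₁, hge, hle, hw⟩ := hbounds _ hmem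
  rw [hdist, Real.mul_rpow hμ₀.le hd.le, ← mul_assoc] at hge hle
  rw [hdist] at hw
  refine ⟨le_mul_of_one_le_right hz₀.le h₁, ?_, by gcongr, ?_⟩
  · rw [mul_assoc]
    gcongr
  · rw [abs_mul, abs_of_pos (mul_pos hz₀ hμ₀)]
    calc z * μ * |w (μ * x)| * (A - |x|) = z * (|w (μ * x)| * (μ * (A - |x|))) := by ring
      _ ≤ z * (K * v (μ * x)) := by gcongr
      _ = K * (z * v (μ * x)) := by ring

end BlowupSolution

theorem stable_blowup_solution_general
    (a b ϑ : ℝ) (ha : 0 < a) (hb : 0 < b) (hϑ : 0 < ϑ) :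
    ∃ c₁ : ℝ, 0 < c₁ ∧ ∃ c₂ : ℝ, 0 < c₂ ∧ ∃ c₃ : ℝ, 0 < c₃ ∧
      ∀ A : ℝ, 0 < A → ∃ h : ℝ → ℝ,
        (∀ x : ℝ, |x| < A → h (-x) = h x) ∧
        (∀ x ∈ Ioo (-A) A, ContDiffAt ℝ 2 h x) ∧
        (∀ x : ℝ, |x| < A →
          (1 / 2) * deriv (deriv h) x = -a * h x + b * h x ^ (1 + ϑ)) ∧
        Tendsto h (𝓝[<] A) atTop ∧ Tendsto h (𝓝[>] (-A)) atTop ∧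
        (∀ x : ℝ, |x| < A →
          max ((a / b) ^ (1 / ϑ)) (c₂ * A ^ (2 / ϑ) * (A ^ 2 - x ^ 2) ^ (-(2 / ϑ))) ≤ h x ∧
          h x ≤ (a / b) ^ (1 / ϑ) * (1 + c₁ * A ^ (2 / ϑ) * (A ^ 2 - x ^ 2) ^ (-(2 / ϑ)))) ∧
        (∀ x : ℝ, |x| < A → |deriv h x| / h x ≤ c₃ / (A - |x|)) := by
  obtain ⟨c₁, hc₁, c₂, hc₂, c₃, hc₃, hsol⟩ := exists_stable_solution ha hb hϑ
  have hq : 0 < 2 / ϑ := by positivity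
  refine ⟨c₁ * 2 ^ (2 / ϑ), by positivity, c₂, hc₂, c₃, hc₃, fun A hA => ?_⟩
  obtain ⟨h, w, hsys, hbounds⟩ := hsol A hA
  have htop (y : ℝ) (hy : |y| = A) : Tendsto h (𝓝[Ioo (-A) A] y) atTop :=
    tendsto_atTop_of_mul_sub_abs_rpow_neg_le hy hc₂ hq fun x hx => (hbounds x hx).2.1
  refine ⟨h, fun x hx => hsys.even x (abs_lt.1 hx),
    fun x hx => hsys.contDiffAt (by fun_prop (disch := positivity)) hx,
    fun x hx => ?_, ?_, ?_, fun x hx => ?_, fun x hx => ?_⟩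
  · rw [(hsys.hasDerivAt_deriv_self (abs_lt.1 hx)).deriv]
    ring
  · exact nhdsWithin_Ioo_eq_nhdsLT (neg_lt_self hA) ▸ htop A (abs_of_pos hA)
  · exact nhdsWithin_Ioo_eq_nhdsGT (neg_lt_self hA) ▸ htop (-A) (by rw [abs_neg, abs_of_pos hA])
  · obtain ⟨hz, hge, hle, -⟩ := hbounds x (abs_lt.1 hx)
    refine ⟨max_le hz (le_trans ?_ hge), hle.trans ?_⟩
    · rw [mul_assoc]
      gcongr
      exact rpow_mul_sq_sub_sq_rpow_neg_le hx hq.le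
    · rw [mul_assoc, mul_assoc]
      gcongr
      exact sub_abs_rpow_neg_le hx hq.le
  · obtain ⟨hz, -, -, hw⟩ := hbounds x (abs_lt.1 hx)
    have hh : 0 < h x := lt_of_lt_of_le (by positivity) hz
    rwa [(hsys.hasDerivAt x (abs_lt.1 hx)).deriv, div_le_div_iff₀ hh (sub_pos.2 hx)]

/-- Existence of a blow-up solution of the stable ODE (1/2)h″ = −a h + b h^{1+ϑ}
(Lemma 4.2): there are positive constants c₁, c₂, c₃ (depending on a, b, ϑ) such that for
every A > 0 there is an even C² function h_A on (−A,A) solving the ODE, blowing up at ±A,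
and satisfying the bounds (1) and (2). -/
theorem stable_blowup_solution
    (a b ϑ : ℝ) (ha : 0 < a) (hb : 0 < b) (hϑ₀ : 0 < ϑ) (hϑ₁ : ϑ ≤ 1) :
    ∃ c₁ : ℝ, 0 < c₁ ∧ ∃ c₂ : ℝ, 0 < c₂ ∧ ∃ c₃ : ℝ, 0 < c₃ ∧
      ∀ A : ℝ, 0 < A → ∃ h : ℝ → ℝ,
        (∀ x : ℝ, |x| < A → h (-x) = h x) ∧
        (∀ x ∈ Ioo (-A) A, ContDiffAt ℝ 2 h x) ∧
        (∀ x : ℝ, |x| < A →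
          (1 / 2) * deriv (deriv h) x = -a * h x + b * h x ^ (1 + ϑ)) ∧
        Tendsto h (𝓝[<] A) atTop ∧ Tendsto h (𝓝[>] (-A)) atTop ∧
        (∀ x : ℝ, |x| < A →
          max ((a / b) ^ (1 / ϑ)) (c₂ * A ^ (2 / ϑ) * (A ^ 2 - x ^ 2) ^ (-(2 / ϑ))) ≤ h x ∧
          h x ≤ (a / b) ^ (1 / ϑ) * (1 + c₁ * A ^ (2 / ϑ) * (A ^ 2 - x ^ 2) ^ (-(2 / ϑ)))) ∧
        (∀ x : ℝ, |x| < A → |deriv h x| / h x ≤ c₃ / (A - |x|)) :=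
  stable_blowup_solution_general a b ϑ ha hb hϑ₀
end
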